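/- arXiv:1611.05482 — 2 statements merged into one kernel-verified Lean document; each statement's English description precedes it below -/
import Mathlib

section
/- For u_p = u(1^ω,(EERR)^ω) and k ≥ 5, the prefix w_{k+2} contains every factor of u_p of length at most |w_{k−5}|. -/
abbrev Word := List Bool

/-- The exchange antimorphism `E`: complement each letter and reverse. -/
def Ebar (w : Word) : Word := (w.map Bool.not).reverse

def IsPal (w : Word) : Prop := w.reverse = w
def IsEPal (w : Word) : Prop := Ebar w = w

open Classical in
lemma exists_minLength {Q : Word → Prop} (hex : ∃ v, Q v) :
    ∃ v, Q v ∧ ∀ v', Q v' → v.length ≤ v'.length := by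
  classical
  have h : ∃ n, ∃ v, Q v ∧ v.length = n := ⟨_, hex.choose, hex.choose_spec, rfl⟩
  obtain ⟨v, hv, hlen⟩ := Nat.find_spec h
  exact ⟨v, hv, fun v' hv' => by
    rw [hlen]; exact Nat.find_min' h ⟨v', hv', rfl⟩⟩

lemma pal_ext (w : Word) : ∃ v, w <+: v ∧ IsPal v :=
  ⟨w ++ w.reverse, List.prefix_append _ _, by simp [IsPal]⟩

lemma epal_ext (w : Word) : ∃ v, w <+: v ∧ IsEPal v :=
  ⟨w ++ Ebar w, List.prefix_append _ _, by
    simp [IsEPal, Ebar, List.map_reverse, List.map_map, Function.comp_def, Bool.not_not]⟩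

/-- The palindromic closure: the shortest palindrome having `w` as a prefix. -/
noncomputable def palCl (w : Word) : Word := (exists_minLength (pal_ext w)).choose

/-- The pseudopalindromic closure: the shortest `E`-palindrome having `w` as a prefix. -/
noncomputable def epalCl (w : Word) : Word := (exists_minLength (epal_ext w)).choose

/-- Prefixes of the generalized pseudostandard word `u(1^ω, (EERR)^ω)`
(the letter `1` is `true`). -/
noncomputable def wp : ℕ → Word
  | 0 => []
  | n+1 => if (n+1) % 4 = 1 ∨ (n+1) % 4 = 2
           then epalCl (wp n ++ [true])
           else palCl (wp n ++ [true])

/-- Factors of `u_p`. -/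
def FactorUp (v : Word) : Prop := ∃ n, v <:+: wp n

/-- Factor complexity of `u_p`. -/
noncomputable def Cp (n : ℕ) : ℕ := Set.ncard {v : Word | FactorUp v ∧ v.length = n}

/-!
Write `L n = |w_n|`. The types of `w_n` and `w_{n+1}` differ exactly for even `n`. Reflecting in
`w_n` turns the pseudopalindromic suffixes of `w_n 1` into pseudopalindromic prefixes of `u_p`, so
the lengths `L n` are known once these prefixes are. By induction they are just the `w_j`, together
with `1` and `101`: for even `n`, a further one between `w_n` and `w_{n+1}` would make `w_n` be
continued both like a shorter `w_j` and like the complement of it. This gives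
`L (n + 1) = 2 * L n - L (n - 3)` for odd `n ≥ 3`, and `L (n + 1) = 2 * L n + 2` or `2 * L n - 3`
for even `n`, according to `n` modulo `4`.

Let now a window be no longer than `w_m`. If it lies in `w_{N+1}` with `N ≥ m + 4`, then it lies in
one of the two copies of `w_N` up to `R` and `E`, or it straddles the center of `w_{N+1}`. In the
latter case `N` is even and the window lies in a central copy of `w_{q+1}` with `q < m + 4`. Thus
every window comes from `w_{m+4}` up to `R` and `E`. Finally, for even `n`, the prefixes `w_n` and
`w_{n+1}` are fixed by different ones among `R` and `E`, so `w_{n+1}` contains all images under `R`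
and `E` of the factors of `w_n`.
-/

/-- `u` restricted to the interval `[i, j)` is a palindrome (`b = false`) or an `E`-palindrome
(`b = true`); vacuous for `j ≤ i`. -/
def IsPalOn (u : ℕ → Bool) (b : Bool) (i j : ℕ) : Prop :=
  ∀ x y, i ≤ x → i ≤ y → x + y + 1 = i + j → u x = (b ^^ u y)

namespace IsPalOn

variable {u : ℕ → Bool} {b b' : Bool} {i j p q r x N : ℕ}

lemma of_le (h : j ≤ i) : IsPalOn u b i j := fun x y hx hy hxy => by omega

lemma narrow {i' j' : ℕ} (h : IsPalOn u b i j) (hi : i ≤ i') (hij : i' + j' = i + j) :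
    IsPalOn u b i' j' :=
  fun x y hx hy hxy => h x y (by omega) (by omega) (by omega)

lemma succ_right_iff (hij : i < j) :
    IsPalOn u b i (j + 1) ↔ IsPalOn u b (i + 1) j ∧ u i = (b ^^ u j) := by
  refine ⟨fun h => ⟨h.narrow (by omega) (by omega), h i j le_rfl hij.le (by omega)⟩, ?_⟩
  rintro ⟨hin, hends⟩ x y hx hy hxy
  rcases hx.eq_or_lt with rfl | hx
  · obtain rfl : y = j := by omega
    exact hends
  · rcases hy.eq_or_lt with rfl | hy
    · obtain rfl : x = j := by omega
      simp [hends]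
    · exact hin x y hx hy (by omega)

lemma reflect (hN : IsPalOn u b 0 N) (hij : i ≤ j) (hj : j ≤ N) (h : IsPalOn u b' i j) :
    IsPalOn u b' (N - j) (N - i) := by
  intro x y hx hy hxy
  rw [hN x (N - 1 - x) (by omega) (by omega) (by omega),
    hN y (N - 1 - y) (by omega) (by omega) (by omega),
    h (N - 1 - x) (N - 1 - y) (by omega) (by omega) (by omega), Bool.xor_left_comm]

lemma shift (hp : IsPalOn u b 0 p) (hq : IsPalOn u b' 0 q) (hpq : p ≤ q) (hx : x < p) :
    u (q - p + x) = (b ^^ (b' ^^ u x)) := by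
  rw [hq (q - p + x) (p - 1 - x) (by omega) (by omega) (by omega),
    hp (p - 1 - x) x (by omega) (by omega) (by omega), Bool.xor_left_comm]

/-- The reflection of `[0, N)` turns suffixes of `[0, N + 1)` other than the last letter into
prefixes, up to the two end letters of the suffix. -/
lemma suffix_iff_prefix (hN : IsPalOn u b 0 N) (hu : u N = true) (hr : r < N) :
    IsPalOn u b' (N - 1 - r) (N + 1) ↔ IsPalOn u b' 0 r ∧ u r = !(b ^^ b') := by
  have hletter : u (N - 1 - r) = (b' ^^ u N) ↔ u r = !(b ^^ b') := by
    rw [hN (N - 1 - r) r (by omega) (by omega) (by omega), hu]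
    cases b <;> cases b' <;> simp
  have hinner : IsPalOn u b' (N - 1 - r + 1) N ↔ IsPalOn u b' 0 r := by
    refine ⟨fun h => ?_, fun h => ?_⟩
    · convert hN.reflect (by omega) le_rfl h using 1 <;> omega
    · convert hN.reflect (Nat.zero_le r) hr.le h using 1 <;> omega
  rw [succ_right_iff (by omega), hletter, hinner]

end IsPalOn

/-- The infinite word `u` is the generalized pseudostandard word with directive bi-sequence
`(1^ω, θ)` and its `n`-th prefix has length `L n`. The closure condition is stated through
suffixes: the closure of `w1` has length `i + |w1|` if the longest pseudopalindromic suffix of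
`w1` starts at position `i`. -/
structure IsPseudostandard (θ : ℕ → Bool) (u : ℕ → Bool) (L : ℕ → ℕ) : Prop where
  length_zero : L 0 = 0
  length_lt_succ : ∀ n, L n < L (n + 1)
  letter : ∀ n, u (L n) = true
  isPalOn : ∀ n, IsPalOn u (θ n) 0 (L n)
  length_succ_le_of_suffix : ∀ n i, i ≤ L n + 1 → IsPalOn u (θ (n + 1)) i (L n + 1) →
    L (n + 1) ≤ i + (L n + 1)

namespace IsPseudostandard

section General

variable {θ u : ℕ → Bool} {L : ℕ → ℕ} {b : Bool} {l m n r x : ℕ}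

lemma strictMono (S : IsPseudostandard θ u L) : StrictMono L :=
  strictMono_nat_of_lt_succ S.length_lt_succ

lemma length_le (S : IsPseudostandard θ u L) (h : m ≤ n) : L m ≤ L n := S.strictMono.monotone h

lemma length_succ_le (S : IsPseudostandard θ u L) (n : ℕ) : L (n + 1) ≤ 2 * L n + 2 := by
  have := S.length_succ_le_of_suffix n _ le_rfl (.of_le le_rfl)
  omega

lemma length_succ_add_le (S : IsPseudostandard θ u L) (hr : r < L n)
    (hpal : IsPalOn u (θ (n + 1)) 0 r) (hu : u r = !(θ n ^^ θ (n + 1))) :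
    L (n + 1) + r ≤ 2 * L n := by
  have := S.length_succ_le_of_suffix n (L n - 1 - r) (by omega)
    (((S.isPalOn n).suffix_iff_prefix (S.letter n) hr).2 ⟨hpal, hu⟩)
  omega

lemma length_succ_le_of_isPalOn (S : IsPseudostandard θ u L) (hl : L n < l)
    (h : IsPalOn u (θ (n + 1)) 0 l) : L (n + 1) ≤ l := by
  by_contra! hlt
  have := S.length_succ_le n
  have := S.length_succ_le_of_suffix n (l - (L n + 1)) (by omega) (h.narrow (by omega) (by omega))
  omega

lemma reflected_prefix (S : IsPseudostandard θ u L) (hl : L n < l) (hl' : l ≤ 2 * L n)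
    (h : IsPalOn u b 0 l) :
    IsPalOn u b 0 (2 * L n - l) ∧ u (2 * L n - l) = !(θ n ^^ b) :=
  ((S.isPalOn n).suffix_iff_prefix (S.letter n) (by omega)).1 (h.narrow (by omega) (by omega))

/-- When the type changes, the last `L n` letters of `w_{n+1}` form the complement of `w_n`. By the
length equation, the letter of `w_n` at position `L m` is sent to the position in the claim. -/
lemma letter_of_type_change (S : IsPseudostandard θ u L) (hθ : θ (n + 1) = !θ n) (hmn : m < n)
    (hlen : L (n + 1) + 2 * L m = L (m + 1) + 2 * L n) :
    u (L n + (L (m + 1) - L m)) = false := by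
  have hm := S.length_lt_succ m
  have hn := S.length_lt_succ n
  have := (S.isPalOn n).shift (S.isPalOn (n + 1)) hn.le (S.strictMono hmn)
  rw [show L (n + 1) - L n + L m = L n + (L (m + 1) - L m) by omega, S.letter, hθ] at this
  simpa using this

lemma central_copy (S : IsPseudostandard θ u L) (hmn : m ≤ n) (hθ : θ m = θ n)
    (hθ' : θ (m + 1) = θ (n + 1)) (hlen : L (n + 1) + 2 * L m = L (m + 1) + 2 * L n)
    (hx : x < L (m + 1)) : u (L n - L m + x) = u x := by
  have hle := S.length_le hmn
  have hle2 := S.length_succ_le m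
  have half : ∀ y ≤ L m, u (L n - L m + y) = u y := by
    intro y hy
    rcases hy.lt_or_eq with hy | rfl
    · simpa [hθ] using (S.isPalOn m).shift (S.isPalOn n) hle hy
    · rw [Nat.sub_add_cancel hle, S.letter, S.letter]
  rcases le_or_gt x (L m) with hxm | hxm
  · exact half x hxm
  · rw [S.isPalOn (n + 1) (L n - L m + x) (L n - L m + (L (m + 1) - 1 - x)) (by omega) (by omega)
        (by omega), half _ (by omega), ← hθ',
      ← S.isPalOn (m + 1) x (L (m + 1) - 1 - x) (by omega) (by omega) (by omega)]

end General

end IsPseudostandard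

/-- The sequence `(EERR)^ω` of types, indexed from `1`, with `E = true` and `R = false`.
The value at `0` is `R`, which extends the sequence periodically. -/
def typeEERR (n : ℕ) : Bool := decide (n % 4 = 1 ∨ n % 4 = 2)

section TypeEERR

variable {m n : ℕ}

lemma typeEERR_eq_true : typeEERR n = true ↔ n % 4 = 1 ∨ n % 4 = 2 := by simp [typeEERR]

lemma typeEERR_eq_false : typeEERR n = false ↔ n % 4 = 0 ∨ n % 4 = 3 := by
  simp only [typeEERR, decide_eq_false_iff_not]; omega

lemma typeEERR_congr (h : m % 4 = n % 4) : typeEERR m = typeEERR n := by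
  simp only [typeEERR, h]

lemma typeEERR_succ_of_even (h : n % 2 = 0) : typeEERR (n + 1) = !typeEERR n := by
  simp only [typeEERR, ← decide_not, decide_eq_decide]; omega

lemma typeEERR_succ_of_odd (h : n % 2 = 1) : typeEERR (n + 1) = typeEERR n := by
  simp only [typeEERR, decide_eq_decide]; omega

end TypeEERR

/-- Every pseudopalindromic prefix of `u` of length at most `N` is one of the `w_j`, with the type
of `w_j`, apart from the palindromes `1` and `101` and the empty word. -/
def PalPrefixesClassified (u : ℕ → Bool) (L : ℕ → ℕ) (N : ℕ) : Prop :=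
  ∀ b l, l ≤ N → IsPalOn u b 0 l →
    l = 0 ∨ (b = false ∧ (l = 1 ∨ l = 3)) ∨ ∃ j, L j = l ∧ typeEERR j = b

namespace IsPseudostandard

variable {u : ℕ → Bool} {L : ℕ → ℕ} {b : Bool} {j l m n r : ℕ}

section Initial

lemma letter_zero (S : IsPseudostandard typeEERR u L) : u 0 = true := by
  simpa [S.length_zero] using S.letter 0

lemma length_one (S : IsPseudostandard typeEERR u L) : L 1 = 2 := by
  have hle : L 1 ≤ 2 * L 0 + 2 := S.length_succ_le 0
  have hlt : L 0 < L 1 := S.length_lt_succ 0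
  have h0 := S.length_zero
  have hne : L 1 ≠ 1 := fun h => by
    simpa [typeEERR] using S.isPalOn 1 0 0 le_rfl le_rfl (by omega)
  omega

lemma letter_one (S : IsPseudostandard typeEERR u L) : u 1 = false := by
  simpa [typeEERR, S.letter_zero] using
    S.isPalOn 1 1 0 (by omega) le_rfl (by rw [S.length_one])

lemma letter_two (S : IsPseudostandard typeEERR u L) : u 2 = true := by
  simpa [S.length_one] using S.letter 1

lemma length_two (S : IsPseudostandard typeEERR u L) : L 2 = 4 := by
  have h1 := S.length_one
  have hlt : L 1 < L 2 := S.length_lt_succ 1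
  have hle : L 2 + 0 ≤ 2 * L 1 :=
    S.length_succ_add_le (by omega) (.of_le le_rfl) (by simp [S.letter_zero, typeEERR])
  have hne : L 2 ≠ 3 := fun h => by
    simpa [typeEERR] using S.isPalOn 2 1 1 (by omega) (by omega) (by omega)
  omega

lemma letter_three (S : IsPseudostandard typeEERR u L) : u 3 = false := by
  simpa [typeEERR, S.letter_zero] using
    S.isPalOn 2 3 0 (by omega) le_rfl (by rw [S.length_two])

lemma isPalOn_three (S : IsPseudostandard typeEERR u L) : IsPalOn u false 0 3 := by
  intro x y _ _ hxy
  obtain ⟨rfl, rfl⟩ | ⟨rfl, rfl⟩ | ⟨rfl, rfl⟩ :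
    (x = 0 ∧ y = 2) ∨ (x = 1 ∧ y = 1) ∨ (x = 2 ∧ y = 0) := by omega
  all_goals simp [S.letter_zero, S.letter_two]

lemma four_le_length (S : IsPseudostandard typeEERR u L) (hn : 2 ≤ n) : 4 ≤ L n :=
  S.length_two ▸ S.length_le hn

lemma classified_two (S : IsPseudostandard typeEERR u L) : PalPrefixesClassified u L (L 2) := by
  intro b l hl h
  rw [S.length_two] at hl
  have h0 := S.letter_zero
  have h1 := S.letter_one
  interval_cases l
  · exact Or.inl rfl
  · have := h 0 0 le_rfl le_rfl rfl
    cases b <;> simp at this ⊢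
  · have := h 0 1 le_rfl (by omega) rfl
    cases b
    · simp_all
    · exact Or.inr (Or.inr ⟨1, S.length_one, rfl⟩)
  · have := h 1 1 (by omega) (by omega) rfl
    cases b <;> simp at this ⊢
  · have := h 0 3 le_rfl (by omega) rfl
    cases b
    · simp_all [S.letter_three]
    · exact Or.inr (Or.inr ⟨2, S.length_two, rfl⟩)

end Initial

section Recurrences

lemma eq_length_of_letter_true (S : IsPseudostandard typeEERR u L)
    (C : PalPrefixesClassified u L (L n)) (hr : r < L n) (h : IsPalOn u b 0 r)
    (hu : u r = true) : r = 0 ∨ ∃ j < n, L j = r ∧ typeEERR j = b := by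
  rcases C b r hr.le h with h0 | ⟨-, rfl | rfl⟩ | ⟨j, rfl, hj⟩
  · exact Or.inl h0
  · simp [S.letter_one] at hu
  · simp [S.letter_three] at hu
  · exact Or.inr ⟨j, S.strictMono.lt_iff_lt.1 hr, rfl, hj⟩

lemma eq_one_or_three_of_letter_false (S : IsPseudostandard typeEERR u L)
    (C : PalPrefixesClassified u L (L n)) (hr : r < L n) (h : IsPalOn u b 0 r)
    (hu : u r = false) : b = false ∧ (r = 1 ∨ r = 3) := by
  rcases C b r hr.le h with rfl | h | ⟨j, rfl, -⟩
  · simp [S.letter_zero] at hu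
  · exact h
  · simp [S.letter] at hu

lemma length_succ_of_mod_four_eq_zero (S : IsPseudostandard typeEERR u L)
    (C : PalPrefixesClassified u L (L n)) (hn : n % 4 = 0) : L (n + 1) = 2 * L n + 2 := by
  have hθ : typeEERR n = false := typeEERR_eq_false.2 (by omega)
  have hpal := S.isPalOn (n + 1)
  rw [typeEERR_succ_of_even (by omega), hθ, Bool.not_false] at hpal
  have hlt := S.length_lt_succ n
  have hle := S.length_succ_le n
  have hlong : 2 * L n < L (n + 1) := by
    by_contra! h
    obtain ⟨hpre, hu⟩ := S.reflected_prefix hlt h hpal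
    simpa using S.eq_one_or_three_of_letter_false C (by omega) hpre (by simpa [hθ] using hu)
  have hne : L (n + 1) ≠ 2 * L n + 1 := fun h => by
    simpa using hpal (L n) (L n) (by omega) (by omega) (by omega)
  omega

lemma length_succ_of_mod_four_eq_two (S : IsPseudostandard typeEERR u L)
    (C : PalPrefixesClassified u L (L n)) (hn : n % 4 = 2) : L (n + 1) + 3 = 2 * L n := by
  have hθ : typeEERR n = true := typeEERR_eq_true.2 (by omega)
  have hθ' : typeEERR (n + 1) = false := by simp [typeEERR_succ_of_even (by omega : n % 2 = 0), hθ]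
  have h4 : 4 ≤ L n := S.four_le_length (by omega)
  have hle : L (n + 1) + 3 ≤ 2 * L n := S.length_succ_add_le (by omega)
    (hθ' ▸ S.isPalOn_three) (by simp [S.letter_three, hθ, hθ'])
  have hlt := S.length_lt_succ n
  obtain ⟨hpre, hu⟩ := S.reflected_prefix hlt (by omega) (S.isPalOn (n + 1))
  have := S.eq_one_or_three_of_letter_false C (by omega) hpre (by simpa [hθ, hθ'] using hu)
  omega

lemma length_add_four (S : IsPseudostandard typeEERR u L)
    (C : PalPrefixesClassified u L (L (m + 3))) (hm : m % 2 = 0) :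
    L (m + 4) + L m = 2 * L (m + 3) := by
  have hθ : typeEERR (m + 4) = typeEERR (m + 3) := typeEERR_succ_of_odd (by omega)
  have hm_lt : L m < L (m + 3) := S.strictMono (by omega)
  have hle : L (m + 4) + L m ≤ 2 * L (m + 3) := S.length_succ_add_le hm_lt
    (typeEERR_congr (by omega : m % 4 = (m + 4) % 4) ▸ S.isPalOn m) (by simp [S.letter, hθ])
  have hlt : L (m + 3) < L (m + 4) := S.length_lt_succ (m + 3)
  obtain ⟨hpre, hu⟩ := S.reflected_prefix hlt (by omega) (S.isPalOn (m + 4))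
  rcases S.eq_length_of_letter_true C (by omega) hpre (by simpa [hθ] using hu) with
    h0 | ⟨j, hj, hjr, hjθ⟩
  · omega
  · have hjm : j ≤ m := by
      simp only [typeEERR, decide_eq_decide] at hjθ
      omega
    have := S.length_le hjm
    omega

lemma length_succ_add_of_mod_eq (S : IsPseudostandard typeEERR u L)
    (C : PalPrefixesClassified u L (L n)) (hn : n % 2 = 0) (hmn : m ≤ n) (hmod : m % 4 = n % 4) :
    L (n + 1) + 2 * L m = L (m + 1) + 2 * L n := by
  have Cm : PalPrefixesClassified u L (L m) := fun b l hl => C b l (hl.trans (S.length_le hmn))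
  obtain h | h : n % 4 = 0 ∨ n % 4 = 2 := by omega
  · rw [S.length_succ_of_mod_four_eq_zero C h, S.length_succ_of_mod_four_eq_zero Cm (by omega)]
    omega
  · have := S.length_succ_of_mod_four_eq_two C h
    have := S.length_succ_of_mod_four_eq_two Cm (by omega)
    omega

end Recurrences

section Classification

/-- The `m` is `j` or `j - 3`. In the second case the two copies of `w_j` in `w_{j+1}` overlap in
`w_m`, so `w_j` is continued like its prefix `w_m`. -/
lemma exists_letter_true_after (S : IsPseudostandard typeEERR u L)
    (C : PalPrefixesClassified u L (L n)) (hn : n % 2 = 0) (hjn : j < n)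
    (hθ : typeEERR j = typeEERR n) (hj : j ≠ 1) :
    ∃ m < n, m % 4 = n % 4 ∧ L j + (L (m + 1) - L m) < L n ∧
      u (L j + (L (m + 1) - L m)) = true := by
  simp only [typeEERR, decide_eq_decide] at hθ
  obtain hmod | ⟨m, rfl, hmod⟩ : j % 4 = n % 4 ∨ ∃ m, j = m + 3 ∧ m % 4 = n % 4 := by
    by_cases hmod : j % 4 = n % 4
    · exact Or.inl hmod
    · exact Or.inr ⟨j - 3, by omega, by omega⟩
  · refine ⟨j, hjn, hmod, ?_⟩
    rw [Nat.add_sub_cancel' (S.length_lt_succ j).le]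
    exact ⟨S.strictMono (by omega), S.letter _⟩
  · have hrec : L (m + 4) + L m = 2 * L (m + 3) := S.length_add_four
      (fun b l hl => C b l (hl.trans (S.length_le hjn.le))) (by omega)
    have hlt := S.length_lt_succ m
    have hlt' : L (m + 1) < L (m + 3) := S.strictMono (by omega)
    have hle : L (m + 4) ≤ L n := S.length_le (by omega)
    refine ⟨m, by omega, hmod, by omega, ?_⟩
    have := (S.isPalOn (m + 3)).shift (S.isPalOn (m + 4)) (S.length_le (by omega)) hlt'
    rw [typeEERR_succ_of_odd (by omega : (m + 3) % 2 = 1), S.letter,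
      show L (m + 4) - L (m + 3) + L (m + 1) = L (m + 3) + (L (m + 1) - L m) by omega] at this
    simpa using this

lemma le_two_mul_length_of_isPalOn (S : IsPseudostandard typeEERR u L)
    (C : PalPrefixesClassified u L (L n)) (h2 : 2 ≤ n) (hn : n % 2 = 0) (hl : l < L (n + 1))
    (h : IsPalOn u (typeEERR n) 0 l) : l ≤ 2 * L n := by
  obtain hmod | hmod : n % 4 = 0 ∨ n % 4 = 2 := by omega
  · have hrec := S.length_succ_of_mod_four_eq_zero C hmod
    have h4 := S.four_le_length h2
    by_contra! hlong
    have hθ : typeEERR n = false := typeEERR_eq_false.2 (by omega)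
    have hzero : u (L n + 1) = false := by
      have := S.isPalOn (n + 1) (L n + 1) (L n) (by omega) (by omega) (by omega)
      simpa [S.letter, typeEERR_succ_of_even hn, hθ] using this
    have hone : u (L n + 1) = true := by
      rw [h (L n + 1) (L n - 1) (by omega) (by omega) (by omega),
        S.isPalOn n (L n - 1) 0 (by omega) le_rfl (by omega), S.letter_zero, hθ]
      rfl
    simp [hone] at hzero
  · have := S.length_succ_of_mod_four_eq_two C hmod
    omega

lemma exists_length_eq_reflected_prefix (S : IsPseudostandard typeEERR u L)
    (C : PalPrefixesClassified u L (L n)) (hn : n % 2 = 0) (hl : L n < l)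
    (hl' : l < L (n + 1)) (hle : l ≤ 2 * L n) (h : IsPalOn u (typeEERR n) 0 l) :
    ∃ j < n, L j = 2 * L n - l ∧ typeEERR j = typeEERR n ∧ j ≠ 1 := by
  obtain ⟨hpre, hu⟩ := S.reflected_prefix hl hle h
  have hcases := S.eq_length_of_letter_true C (by omega) hpre (by simpa using hu)
  obtain hmod | hmod : n % 4 = 0 ∨ n % 4 = 2 := by omega
  · have hθ : typeEERR n = false := typeEERR_eq_false.2 (by omega)
    rcases hcases with h0 | ⟨j, hj, hjr, hjθ⟩
    · have hn0 : n ≠ 0 := by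
        rintro rfl
        rw [S.length_zero] at hl hle
        omega
      exact ⟨0, by omega, by rw [S.length_zero, h0], hθ ▸ rfl, by omega⟩
    · refine ⟨j, hj, hjr, hjθ, ?_⟩
      rintro rfl
      rw [hθ, typeEERR_eq_false] at hjθ
      omega
  · have hrec := S.length_succ_of_mod_four_eq_two C hmod
    rcases hcases with h0 | ⟨j, hj, hjr, hjθ⟩
    · omega
    · refine ⟨j, hj, hjr, hjθ, ?_⟩
      rintro rfl
      rw [S.length_one] at hjr
      omega

lemma not_isPalOn_between_of_even (S : IsPseudostandard typeEERR u L)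
    (C : PalPrefixesClassified u L (L n)) (h2 : 2 ≤ n) (hn : n % 2 = 0) (hl : L n < l)
    (hl' : l < L (n + 1)) : ¬ IsPalOn u (typeEERR n) 0 l := by
  intro h
  have hle := S.le_two_mul_length_of_isPalOn C h2 hn hl' h
  obtain ⟨j, hjn, hjr, hjθ, hj1⟩ := S.exists_length_eq_reflected_prefix C hn hl hl' hle h
  obtain ⟨m, hmn, hmod, hlt, htrue⟩ := S.exists_letter_true_after C hn hjn hjθ hj1
  have hfalse := S.letter_of_type_change (typeEERR_succ_of_even hn) hmn
    (S.length_succ_add_of_mod_eq C hn hmn.le hmod)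
  have := (S.isPalOn n).shift h hl.le hlt
  rw [show l - L n + (L j + (L (m + 1) - L m)) = L n + (L (m + 1) - L m) by omega, htrue,
    hfalse] at this
  simp at this

lemma not_isPalOn_between_of_odd (S : IsPseudostandard typeEERR u L)
    (C : PalPrefixesClassified u L (L n)) (h2 : 2 ≤ n) (hn : n % 2 = 1) (hl : L n < l)
    (hl' : l < L (n + 1)) : ¬ IsPalOn u (!typeEERR n) 0 l := by
  intro h
  obtain ⟨m, rfl⟩ : ∃ m, n = m + 3 := ⟨n - 3, by omega⟩
  have hrec := S.length_add_four C (by omega)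
  change l < L (m + 4) at hl'
  obtain ⟨hpre, hu⟩ := S.reflected_prefix hl (by omega) h
  obtain ⟨hθ, hr⟩ := S.eq_one_or_three_of_letter_false C (by omega) hpre (by simpa using hu)
  rw [Bool.not_eq_false', typeEERR_eq_true] at hθ
  have := S.four_le_length (by omega : 2 ≤ m)
  omega

lemma classified_succ (S : IsPseudostandard typeEERR u L) (h2 : 2 ≤ n)
    (C : PalPrefixesClassified u L (L n)) : PalPrefixesClassified u L (L (n + 1)) := by
  intro b l hl h
  rcases le_or_gt l (L n) with hln | hln
  · exact C b l hln h
  by_cases hb : b = typeEERR (n + 1)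
  · subst hb
    exact Or.inr (Or.inr ⟨n + 1, le_antisymm (S.length_succ_le_of_isPalOn hln h) hl, rfl⟩)
  exfalso
  have hb' : b = !typeEERR (n + 1) := by rwa [Bool.eq_not]
  subst hb'
  rcases hl.eq_or_lt with rfl | hl
  · have h0 := h 0 (L (n + 1) - 1) le_rfl (by omega) (by omega)
    have h1 := S.isPalOn (n + 1) 0 (L (n + 1) - 1) le_rfl (by omega) (by omega)
    rw [h1] at h0
    simp at h0
  · rcases Nat.mod_two_eq_zero_or_one n with hn | hn
    · rw [typeEERR_succ_of_even hn, Bool.not_not] at h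
      exact S.not_isPalOn_between_of_even C h2 hn hln hl h
    · rw [typeEERR_succ_of_odd hn] at h
      exact S.not_isPalOn_between_of_odd C h2 hn hln hl h

lemma classified (S : IsPseudostandard typeEERR u L) (n : ℕ) :
    PalPrefixesClassified u L (L n) := by
  suffices h : ∀ k ≥ 2, PalPrefixesClassified u L (L k) from fun b l hl =>
    h (n + 2) (by omega) b l (hl.trans (S.length_le (by omega)))
  intro k hk
  induction k, hk using Nat.le_induction with
  | base => exact S.classified_two
  | succ k hk ih => exact S.classified_succ hk ih

end Classification

end IsPseudostandard

/-- The word operation `R` (`b = false`) or `E` (`b = true`). -/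
def anti (b : Bool) (w : Word) : Word := (w.map (b ^^ ·)).reverse

section Anti

variable {b : Bool} {v w x y : Word}

lemma anti_false (w : Word) : anti false w = w.reverse := by simp [anti]

lemma anti_true (w : Word) : anti true w = Ebar w := by simp [anti, Ebar]

lemma anti_append (b : Bool) (v w : Word) : anti b (v ++ w) = anti b w ++ anti b v := by
  simp [anti]

lemma length_anti (b : Bool) (w : Word) : (anti b w).length = w.length := by simp [anti]

lemma anti_anti (b c : Bool) (w : Word) : anti b (anti c w) = w.map ((b ^^ c) ^^ ·) := by
  simp [anti, Function.comp_def]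

lemma map_xor_anti (b c : Bool) (w : Word) : (anti c w).map (b ^^ ·) = anti (b ^^ c) w := by
  simp [anti, Function.comp_def]

lemma anti_infix (b : Bool) (h : v <:+: w) : anti b v <:+: anti b w :=
  List.reverse_infix.2 (h.map _)

/-- All images of `v` under the group generated by `R` and `E` are factors of `w`. -/
def OrbitOccursIn (v w : Word) : Prop :=
  ∀ b, v.map (b ^^ ·) <:+: w ∧ anti b v <:+: w

lemma OrbitOccursIn.of_anti (h : OrbitOccursIn (anti b v) w) : OrbitOccursIn v w := by
  intro c
  have hmap := (h (c ^^ b)).2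
  have hanti := (h (c ^^ b)).1
  rw [anti_anti] at hmap
  rw [map_xor_anti] at hanti
  simpa using And.intro hmap hanti

lemma orbitOccursIn_of_infix (hv : v <:+: x) (hx : anti b x = x) (hxy : x <:+: y)
    (hy : anti (!b) y = y) : OrbitOccursIn v y := by
  have hb : anti b v <:+: x := hx ▸ anti_infix b hv
  have hnot : anti (!b) v <:+: y := hy ▸ anti_infix (!b) (hv.trans hxy)
  have hcompl : v.map (true ^^ ·) <:+: y := by
    have := anti_infix (!b) (hb.trans hxy)
    rwa [hy, anti_anti, Bool.not_xor, Bool.xor_self] at this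
  intro c
  refine ⟨?_, ?_⟩
  · cases c
    · simpa using hv.trans hxy
    · exact hcompl
  · obtain rfl | rfl : c = b ∨ c = !b := by rw [Bool.eq_not]; exact em _
    · exact hb.trans hxy
    · exact hnot

end Anti

/-- The factor of length `M` of `u` that starts at position `a`. -/
def factor (u : ℕ → Bool) (a M : ℕ) : Word := (List.range' a M).map u

section Factor

variable {u : ℕ → Bool} {b : Bool} {a l K M N : ℕ} {v : Word}

lemma length_factor (u : ℕ → Bool) (a M : ℕ) : (factor u a M).length = M := by simp [factor]

lemma factor_append (u : ℕ → Bool) (a M N : ℕ) :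
    factor u a M ++ factor u (a + M) N = factor u a (M + N) := by
  simp only [factor, ← List.map_append]
  simp

lemma factor_infix (h : a + M ≤ K) : factor u a M <:+: factor u 0 K := by
  obtain ⟨t, rfl⟩ := Nat.exists_eq_add_of_le h
  refine ⟨factor u 0 a, factor u (a + M) t, ?_⟩
  rw [← factor_append u 0 (a + M), ← factor_append u 0 a, zero_add, zero_add]

lemma exists_eq_factor_of_infix (h : v <:+: factor u 0 N) :
    ∃ a, a + v.length ≤ N ∧ v = factor u a v.length := by
  obtain ⟨s, t, h⟩ := h
  have hlen : s.length + v.length + t.length = N := by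
    simpa [length_factor, Nat.add_assoc] using congrArg List.length h
  refine ⟨s.length, by omega, ?_⟩
  rw [← hlen, ← factor_append, ← factor_append] at h
  have := (List.append_inj h (by simp [length_factor])).1
  simpa using (List.append_inj this (by simp [length_factor])).2

lemma eq_factor_of_prefix (h : v <+: factor u 0 N) : v = factor u 0 v.length := by
  have hle : v.length ≤ N := by simpa [length_factor] using h.length_le
  obtain ⟨t, rfl⟩ := Nat.exists_eq_add_of_le hle
  rw [← factor_append] at h
  exact (List.prefix_of_prefix_length_le h (List.prefix_append _ _)
    (by simp [length_factor])).eq_of_length (by simp [length_factor])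

lemma factor_congr {a' : ℕ} (h : ∀ i < M, u (a + i) = u (a' + i)) :
    factor u a M = factor u a' M := by
  apply List.ext_getElem
  · simp [length_factor]
  · intro i hi _
    simpa [factor] using h i (by simpa [length_factor] using hi)

lemma anti_factor_eq_iff {c : ℕ} : anti b (factor u a M) = factor u c M ↔
    ∀ i < M, u (c + i) = (b ^^ u (a + (M - 1 - i))) := by
  rw [eq_comm, List.ext_get_iff]
  simp [anti, factor]

lemma anti_factor_eq_self_iff : anti b (factor u a M) = factor u a M ↔ IsPalOn u b a (a + M) := by
  rw [anti_factor_eq_iff]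
  refine ⟨fun h x y hx hy hxy => ?_, fun h i hi => h _ _ (by omega) (by omega) (by omega)⟩
  convert h (x - a) (by omega) using 2
  · omega
  · congr 1; omega

lemma IsPalOn.anti_factor (h : IsPalOn u b 0 l) (hl : a + M ≤ l) :
    anti b (factor u a M) = factor u (l - M - a) M :=
  anti_factor_eq_iff.2 fun _ _ => h _ _ (by omega) (by omega) (by omega)

end Factor

namespace IsPseudostandard

section Windows

variable {u : ℕ → Bool} {L : ℕ → ℕ} {a m n M N : ℕ}

lemma anti_prefix {θ : ℕ → Bool} (S : IsPseudostandard θ u L) (n : ℕ) :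
    anti (θ n) (factor u 0 (L n)) = factor u 0 (L n) :=
  anti_factor_eq_self_iff.2 (by simpa using S.isPalOn n)

lemma orbitOccursIn_of_type_change {θ : ℕ → Bool} (S : IsPseudostandard θ u L)
    (hθ : θ (n + 1) = !θ n) (ha : a + M ≤ L n) :
    OrbitOccursIn (factor u a M) (factor u 0 (L (n + 1))) :=
  orbitOccursIn_of_infix (factor_infix ha) (S.anti_prefix n)
    (factor_infix (by simpa using (S.length_lt_succ n).le)) (hθ ▸ S.anti_prefix (n + 1))

/-- For odd `N` the copies of `w_N` at both ends of `w_{N+1}` overlap in `w_{N-3}`, so no short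
window straddles them. For even `N` a straddling window is central in `w_{N+1}`, where a copy of
`w_{q+1}` sits for the `q` with `m ≤ q ≤ m + 3` and `q ≡ N [MOD 4]`. -/
lemma exists_factor_eq_of_straddling (S : IsPseudostandard typeEERR u L) (hN : m + 4 ≤ N)
    (hM : M ≤ L m) (ha : L N < a + M) (ha' : a + L N < L (N + 1)) :
    ∃ a', a' + M ≤ L (m + 4) ∧ factor u a M = factor u a' M := by
  have heven : N % 2 = 0 := by
    by_contra hN2
    obtain ⟨p, rfl⟩ : ∃ p, N = p + 3 := ⟨N - 3, by omega⟩
    have : L (p + 4) + L p = 2 * L (p + 3) := S.length_add_four (S.classified _) (by omega)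
    have : a + L (p + 3) < L (p + 4) := ha'
    have := S.length_le (by omega : m ≤ p)
    omega
  obtain ⟨q, hmq, hqm, hmod⟩ : ∃ q, m ≤ q ∧ q + 1 ≤ m + 4 ∧ q % 4 = N % 4 :=
    ⟨m + (N - m) % 4, by omega, by omega, by omega⟩
  have hlen := S.length_succ_add_of_mod_eq (S.classified N) heven (by omega) hmod
  have hq := S.length_le hmq
  have hq' := S.length_le hqm
  have hqN := S.length_le (by omega : q ≤ N)
  refine ⟨a - (L N - L q), by omega, factor_congr fun i hi => ?_⟩
  rw [← S.central_copy (by omega) (typeEERR_congr hmod) (typeEERR_congr (by omega)) hlen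
    (by omega : a - (L N - L q) + i < L (q + 1))]
  congr 1
  omega

theorem orbitOccursIn_prefix (S : IsPseudostandard typeEERR u L) (hn : n % 2 = 0)
    (hmn : m + 4 ≤ n) (hM : M ≤ L m) (ha : a + M ≤ L N) :
    OrbitOccursIn (factor u a M) (factor u 0 (L (n + 1))) := by
  have base : ∀ a, a + M ≤ L (m + 4) →
      OrbitOccursIn (factor u a M) (factor u 0 (L (n + 1))) := fun a ha =>
    S.orbitOccursIn_of_type_change (typeEERR_succ_of_even hn) (ha.trans (S.length_le hmn))
  induction N generalizing a with
  | zero => exact base a (ha.trans (S.length_le (Nat.zero_le _)))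
  | succ N ih =>
    rcases le_or_gt (N + 1) (m + 4) with hN | hN
    · exact base a (ha.trans (S.length_le hN))
    rcases le_or_gt (a + M) (L N) with hleft | hleft
    · exact ih hleft
    rcases le_or_gt (L (N + 1)) (a + L N) with hright | hright
    · refine .of_anti (b := typeEERR (N + 1)) ?_
      rw [(S.isPalOn (N + 1)).anti_factor ha]
      exact ih (by omega)
    · obtain ⟨a', ha', heq⟩ := S.exists_factor_eq_of_straddling (by omega) hM hleft hright
      exact heq ▸ base a' ha'

end Windows

end IsPseudostandard

section InfiniteWord

variable {m n : ℕ}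

lemma wp_succ_spec (n : ℕ) :
    wp n ++ [true] <+: wp (n + 1) ∧ anti (typeEERR (n + 1)) (wp (n + 1)) = wp (n + 1) ∧
      ∀ v, wp n ++ [true] <+: v → anti (typeEERR (n + 1)) v = v →
        (wp (n + 1)).length ≤ v.length := by
  by_cases h : (n + 1) % 4 = 1 ∨ (n + 1) % 4 = 2
  · obtain ⟨⟨hpre, hpal⟩, hmin⟩ := (exists_minLength (epal_ext (wp n ++ [true]))).choose_spec
    simp only [wp, if_pos h, typeEERR_eq_true.2 h, anti_true]
    exact ⟨hpre, hpal, fun v hv hv' => hmin v ⟨hv, hv'⟩⟩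
  · obtain ⟨⟨hpre, hpal⟩, hmin⟩ := (exists_minLength (pal_ext (wp n ++ [true]))).choose_spec
    simp only [wp, if_neg h, typeEERR_eq_false.2 (by omega : (n + 1) % 4 = 0 ∨ (n + 1) % 4 = 3),
      anti_false]
    exact ⟨hpre, hpal, fun v hv hv' => hmin v ⟨hv, hv'⟩⟩

lemma wp_prefix (h : m ≤ n) : wp m <+: wp n := by
  induction n, h using Nat.le_induction with
  | base => exact List.prefix_rfl
  | succ n _ ih => exact ih.trans ((List.prefix_append _ _).trans (wp_succ_spec n).1)

lemma length_wp_lt_succ (n : ℕ) : (wp n).length < (wp (n + 1)).length := by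
  simpa using (wp_succ_spec n).1.length_le

lemma le_length_wp (n : ℕ) : n ≤ (wp n).length :=
  (strictMono_nat_of_lt_succ length_wp_lt_succ).le_apply

/-- The infinite word `u_p`; the default value of `getD` is never taken since `i < |w_{i+1}|`. -/
noncomputable def up (i : ℕ) : Bool := (wp (i + 1)).getD i false

lemma wp_eq_factor (n : ℕ) : wp n = factor up 0 (wp n).length := by
  apply List.ext_getElem
  · rw [length_factor]
  intro i hi _
  have hi' : i < (wp (i + 1)).length := le_length_wp (i + 1)
  have : (wp n)[i] = (wp (i + 1))[i] := by
    rcases le_total n (i + 1) with h | h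
    · exact (wp_prefix h).getElem hi
    · exact ((wp_prefix h).getElem hi').symm
  simp [factor, up, this, hi']

lemma wp_append_true_eq_factor (n : ℕ) :
    wp n ++ [true] = factor up 0 ((wp n).length + 1) := by
  have h := (wp_succ_spec n).1
  rw [wp_eq_factor (n + 1)] at h
  simpa using eq_factor_of_prefix h

lemma isPseudostandard_up : IsPseudostandard typeEERR up (fun n => (wp n).length) where
  length_zero := by simp [wp]
  length_lt_succ := length_wp_lt_succ
  letter n := by
    have h := wp_append_true_eq_factor n
    rw [← factor_append, ← wp_eq_factor, List.append_cancel_left_eq] at h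
    simpa [factor] using h.symm
  isPalOn n := by
    cases n with
    | zero => exact .of_le (by simp [wp])
    | succ n =>
      have h := (wp_succ_spec n).2.1
      rw [wp_eq_factor (n + 1), anti_factor_eq_self_iff, zero_add] at h
      exact h
  length_succ_le_of_suffix n i hi h := by
    obtain ⟨k, hk⟩ := Nat.exists_eq_add_of_le hi
    have hsplit : wp n ++ [true] = factor up 0 i ++ factor up i k := by
      rw [wp_append_true_eq_factor, hk, ← factor_append, zero_add]
    have hsuffix : anti (typeEERR (n + 1)) (factor up i k) = factor up i k :=
      anti_factor_eq_self_iff.2 (hk ▸ h)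
    have hmin := (wp_succ_spec n).2.2
      (wp n ++ [true] ++ anti (typeEERR (n + 1)) (factor up 0 i)) (List.prefix_append _ _) (by
        rw [hsplit, anti_append, anti_append, hsuffix, anti_anti]
        simp)
    simp only [List.length_append, length_anti, length_factor, List.length_singleton] at hmin
    omega

end InfiniteWord

theorem prefix_contains_all_short_factors_general {m n : ℕ} (hn : Even n) (hmn : m + 4 ≤ n)
    {v : Word} (hv : FactorUp v) (hlen : v.length ≤ (wp m).length) : v <:+: wp (n + 1) := by
  obtain ⟨N, hvN⟩ := hv
  rw [wp_eq_factor] at hvN ⊢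
  obtain ⟨a, ha, hva⟩ := exists_eq_factor_of_infix hvN
  rw [hva]
  simpa using (isPseudostandard_up.orbitOccursIn_prefix (Nat.even_iff.1 hn) hmn hlen ha false).1

/-- for `k ≥ 5`, the prefix `w_{k+2}` contains every factor of `u_p`
of length at most `|w_{k-5}|`. -/
theorem prefix_contains_all_short_factors (k : ℕ) (hk : 5 ≤ k) :
    ∀ v : Word, FactorUp v → v.length ≤ (wp (k-5)).length → v <:+: wp (k+2) := by
  intro v hv hlen
  have h : v <:+: wp (2 * (k / 2) + 1) :=
    prefix_contains_all_short_factors_general (even_two_mul _) (by omega) hv hlen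
  exact h.trans (wp_prefix (by omega)).isInfix
end

section
/- For u_p = u(1^ω,(EERR)^ω) and every n ∈ ℕ, the second difference of factor complexity satisfies Δ²C(n) ≥ 2 if n = |w_{2k+1}| for some k ≥ 1, Δ²C(n) ≥ −2 if n = |s_{2k+1}| for some k ≥ 2, and Δ²C(n) ≥ 0 otherwise. -/
/-- The weak bispecial candidate `s_{4k+1}` (an overlap product). -/
noncomputable def s1 (k : ℕ) : Word :=
  (wp (4*k-3)).reverse ++ (wp (4*k-1)).drop (wp (4*k-4)).length
    ++ (wp (4*k-3)).drop (wp (4*k-4)).length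

/-- The weak bispecial candidate `s_{4k+3}` (an overlap product). -/
noncomputable def s3 (k : ℕ) : Word :=
  Ebar (wp (4*k-1)) ++ (wp (4*k+1)).drop (wp (4*k-2)).length
    ++ (wp (4*k-1)).drop (wp (4*k-2)).length

/-- `sOdd k = s_{2k+1}`. -/
noncomputable def sOdd (k : ℕ) : Word := if k % 2 = 0 then s1 (k/2) else s3 (k/2)

/-!
For `n ≥ 2` the consecutive differences modulo 2 of the letters of `wp n` form a palindrome
`bitPal (n - 2)`: palindromes and `E`-palindromes are the partial sums of palindromes of sum 0 and
1 modulo 2. Since `u_p` is closed under complementation, its complexity at `n + 1` is twice the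
complexity at `n` of the language of the palindromes `bitPal`.

The palindromes `bitPal` arise by coding a ternary word over the return words to `111`, and that
ternary word is fixed by coding over the return words to `ABA`. A weak bispecial word that contains
the marker is, apart from one exceptional word per code, the code of a shorter weak bispecial word,
so the weak bispecial binary words form a single sequence `bitWeak`, whose lengths strictly
interlace with those of the strong bispecial words `bitPal (2 * k + 1)`. The second difference of
the complexity at `n` is the sum of the bilateral multiplicities of the words of length `n`, which
are negative (namely `-1`) only for weak bispecial words and positive for strong ones.
-/

/-- The list of all factors of a word. -/
def factors {α : Type*} (l : List α) : List (List α) := l.tails.flatMap List.inits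

lemma mem_factors_of_infix {α : Type*} {v l : List α} (h : v <:+: l) : v ∈ factors l := by
  obtain ⟨u, hvu, hul⟩ := List.infix_iff_prefix_suffix.1 h
  exact List.mem_flatMap.2 ⟨u, (List.mem_tails _ _).2 hul, (List.mem_inits _ _).2 hvu⟩

lemma infix_append_append_cases {α : Type*} {v l m r : List α} (h : v <:+: l ++ m ++ r) :
    m <:+: v ∨ v <:+: l ++ m ∨ v <:+: m ++ r := by
  obtain ⟨p, q, h⟩ := h
  rw [List.append_assoc, List.append_assoc] at h
  rcases List.append_eq_append_iff.1 h with ⟨l', rfl, hl⟩ | ⟨p', rfl, hp⟩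
  · rw [← List.append_assoc] at hl
    rcases List.append_eq_append_iff.1 hl with ⟨m', hm, -⟩ | ⟨v', hv, -⟩
    · exact Or.inr (Or.inl ⟨p, m', by rw [List.append_assoc, List.append_assoc, hm]⟩)
    · exact Or.inl ⟨l', v', hv.symm⟩
  · exact Or.inr (Or.inr ⟨p', q, by rw [hp, List.append_assoc]⟩)

/-- A set of words closed under taking factors. -/
def FactorClosed {α : Type*} (P : List α → Prop) : Prop := ∀ ⦃v w⦄, v <:+: w → P w → P v

/-- A set of words closed under reversal. -/
def ReversalClosed {α : Type*} (P : List α → Prop) : Prop := ∀ ⦃v⦄, P v → P v.reverse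

section Extensions

variable {Γ : Type*} {P : List Γ → Prop} {f : Γ → Bool} {v : List Γ} {i j : Bool}

/-- `v` has a two-sided extension in `P` whose outer letters have colours `i` and `j`
under `f`. -/
def HasExt (P : List Γ → Prop) (f : Γ → Bool) (v : List Γ) (i j : Bool) : Prop :=
  ∃ a b, f a = i ∧ f b = j ∧ P (a :: (v ++ [b]))

/-- A weak bispecial word: exactly two of the four colour pairs extend it, and they form a
diagonal. -/
def IsWeak (P : List Γ → Prop) (f : Γ → Bool) (v : List Γ) : Prop :=
  ∃ s, ∀ i j, HasExt P f v i j ↔ xor i j = s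

/-- A strong bispecial word: all four colour pairs extend it. -/
def IsStrong (P : List Γ → Prop) (f : Γ → Bool) (v : List Γ) : Prop := ∀ i j, HasExt P f v i j

instance [DecidablePred P] [Fintype Γ] : Decidable (HasExt P f v i j) :=
  inferInstanceAs (Decidable (∃ a b, f a = i ∧ f b = j ∧ P (a :: (v ++ [b]))))

lemma HasExt.mono {Q : List Γ → Prop} (hPQ : ∀ w, P w → Q w) (h : HasExt P f v i j) :
    HasExt Q f v i j := by
  obtain ⟨a, b, ha, hb, h⟩ := h
  exact ⟨a, b, ha, hb, hPQ _ h⟩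

lemma HasExt.reverse (hP : ReversalClosed P) (h : HasExt P f v i j) :
    HasExt P f v.reverse j i := by
  obtain ⟨a, b, ha, hb, h⟩ := h
  exact ⟨b, a, hb, ha, by simpa using hP h⟩

lemma HasExt.mem (hP : FactorClosed P) (h : HasExt P f v i j) : P v := by
  obtain ⟨a, b, -, -, h⟩ := h
  exact hP ⟨[a], [b], rfl⟩ h

lemma IsWeak.exists_right (h : IsWeak P f v) (i : Bool) : ∃ j, HasExt P f v i j := by
  obtain ⟨s, h⟩ := h
  exact ⟨xor i s, (h _ _).2 (by simp)⟩

lemma IsWeak.reverse (hP : ReversalClosed P) (h : IsWeak P f v) : IsWeak P f v.reverse := by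
  obtain ⟨s, h⟩ := h
  refine ⟨s, fun i j ↦ ?_⟩
  rw [Bool.xor_comm, ← h]
  exact ⟨fun h ↦ by simpa using h.reverse hP, HasExt.reverse hP⟩

lemma IsWeak.exists_left (h : IsWeak P f v) (j : Bool) : ∃ i, HasExt P f v i j := by
  obtain ⟨s, h⟩ := h
  exact ⟨xor s j, (h _ _).2 (by simp)⟩

lemma IsWeak.mem (hP : FactorClosed P) (h : IsWeak P f v) : P v :=
  let ⟨_, h⟩ := h.exists_right true
  h.mem hP

lemma IsWeak.not_hasExt_not (hv : IsWeak P f v) (h : HasExt P f v i j) :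
    ¬ HasExt P f v i (!j) := by
  obtain ⟨s, hs⟩ := hv
  rw [hs] at h ⊢
  subst h
  simp

end Extensions

/-- A coding of words over `ι` by return words: `ret c` is such that `marker ++ ret c` is a
word with exactly two occurrences of the palindrome `marker`, one at either end. -/
structure ReturnCode (ι Γ : Type*) where
  marker : List Γ
  ret : ι → List Γ
  reverse_marker : marker.reverse = marker
  marker_append_ret : ∀ c, marker ++ ret c = (ret c).reverse ++ marker
  ret_ne_nil : ∀ c, ret c ≠ []
  ret_prefix : ∀ c c', ret c <+: ret c' → c = c'
  marker_sync : ∀ c, ∀ p ∈ (ret c).reverse.inits, p ++ marker <+: (ret c).reverse ++ marker →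
    p = [] ∨ p = (ret c).reverse

namespace ReturnCode

variable {ι Γ : Type*} (K : ReturnCode ι Γ)

/-- The code of a word: its return words written one after the other, starting from the
marker. -/
def code (W : List ι) : List Γ := K.marker ++ W.flatMap K.ret

lemma code_append (V W : List ι) : K.code (V ++ W) = K.code V ++ W.flatMap K.ret := by
  simp [code]

lemma code_cons (c : ι) (W : List ι) : K.code (c :: W) = (K.ret c).reverse ++ K.code W := by
  rw [code, List.flatMap_cons, ← List.append_assoc, K.marker_append_ret, List.append_assoc, code]

lemma length_code_append (V W : List ι) :
    (K.code (V ++ W)).length + K.marker.length = (K.code V).length + (K.code W).length := by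
  simp only [code, List.flatMap_append, List.length_append]
  omega

lemma length_code_cons (c : ι) (W : List ι) :
    (K.code (c :: W)).length = (K.ret c).length + (K.code W).length := by
  rw [code_cons, List.length_append, List.length_reverse]

lemma code_eq_reverse_flatMap_append (W : List ι) :
    K.code W = (W.reverse.flatMap K.ret).reverse ++ K.marker := by
  induction W with
  | nil => simp [code]
  | cons c W ih => rw [code_cons, ih]; simp

lemma reverse_code (W : List ι) : (K.code W).reverse = K.code W.reverse := by
  rw [code_eq_reverse_flatMap_append, List.reverse_append, List.reverse_reverse,
    K.reverse_marker, code]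

lemma length_le_length_flatMap_ret (W : List ι) : W.length ≤ (W.flatMap K.ret).length := by
  induction W with
  | nil => simp
  | cons c W ih =>
    have := List.length_pos_iff.2 (K.ret_ne_nil c)
    simp only [List.length_cons, List.flatMap_cons, List.length_append]
    omega

lemma eq_of_append_eq_append {c c' : ι} {s s' : List Γ} (h : K.ret c ++ s = K.ret c' ++ s') :
    c = c' := by
  have hc : K.ret c <+: K.ret c' ++ s' := ⟨s, h⟩
  rcases List.prefix_or_prefix_of_prefix hc (List.prefix_append _ _) with h | h
  · exact K.ret_prefix _ _ h
  · exact (K.ret_prefix _ _ h).symm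

lemma flatMap_ret_eq_append {v W : List ι} {s : List Γ}
    (h : W.flatMap K.ret = v.flatMap K.ret ++ s) : ∃ W', W = v ++ W' ∧ s = W'.flatMap K.ret := by
  induction v generalizing W with
  | nil => exact ⟨W, rfl, by simpa using h.symm⟩
  | cons c v ih =>
    cases W with
    | nil => simp [K.ret_ne_nil] at h
    | cons c' W =>
      simp only [List.flatMap_cons, List.append_assoc] at h
      obtain rfl := K.eq_of_append_eq_append h
      obtain ⟨W', rfl, hs⟩ := ih (List.append_cancel_left h)
      exact ⟨W', rfl, hs⟩

lemma code_eq_append_marker_append {W : List ι} {p s : List Γ}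
    (h : K.code W = p ++ K.marker ++ s) :
    ∃ W₁ W₂, W = W₁ ++ W₂ ∧ p ++ K.marker = K.code W₁ ∧ s = W₂.flatMap K.ret := by
  induction W generalizing p with
  | nil =>
    have hlen := congrArg List.length h
    simp only [code, List.flatMap_nil, List.append_nil, List.length_append] at hlen
    obtain rfl : p = [] := List.length_eq_zero_iff.1 (by omega)
    obtain rfl : s = [] := List.length_eq_zero_iff.1 (by omega)
    exact ⟨[], [], rfl, by simp [code], rfl⟩
  | cons c W ih =>
    have peel (p') (hp : p = (K.ret c).reverse ++ p') : ∃ W₁ W₂, c :: W = W₁ ++ W₂ ∧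
        p ++ K.marker = K.code W₁ ∧ s = W₂.flatMap K.ret := by
      subst hp
      rw [code_cons, List.append_assoc, List.append_assoc] at h
      obtain ⟨W₁, W₂, rfl, h₁, h₂⟩ := ih (by simpa using List.append_cancel_left h)
      exact ⟨c :: W₁, W₂, rfl, by rw [code_cons, ← h₁, List.append_assoc], h₂⟩
    have hprefix : (K.ret c).reverse <+: p ++ (K.marker ++ s) :=
      ⟨K.code W, by rw [← code_cons, h, List.append_assoc]⟩
    rcases List.prefix_or_prefix_of_prefix hprefix (List.prefix_append _ _) with ⟨p', hp⟩ | hp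
    · exact peel p' hp.symm
    · have hmarker : p ++ K.marker <+: (K.ret c).reverse ++ K.marker := by
        refine List.prefix_of_prefix_length_le (l₃ := K.code (c :: W)) ⟨s, h.symm⟩ ?_ ?_
        · exact ⟨W.flatMap K.ret, by rw [code_cons, List.append_assoc, code]⟩
        · simpa using hp.length_le
      rcases K.marker_sync c p ((List.mem_inits _ _).2 hp) hmarker with rfl | hp
      · refine ⟨[], c :: W, rfl, by simp [code], ?_⟩
        simpa [code] using h.symm
      · exact peel [] (by simpa using hp)

lemma reverse_append_code_append_infix_code {W v : List ι} {x y : List Γ} :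
    x.reverse ++ K.code v ++ y <:+: K.code W ↔
      ∃ W₁ W₂ : List ι, W = W₁.reverse ++ v ++ W₂ ∧
        x <+: W₁.flatMap K.ret ∧ y <+: W₂.flatMap K.ret := by
  constructor
  · rintro ⟨p, s, h⟩
    obtain ⟨W₁, W₂, rfl, h₁, h₂⟩ := K.code_eq_append_marker_append
      (p := p ++ x.reverse) (s := v.flatMap K.ret ++ (y ++ s)) (by rw [← h, code]; simp)
    obtain ⟨W₃, rfl, h₃⟩ := K.flatMap_ret_eq_append h₂.symm
    refine ⟨W₁.reverse, W₃, by simp, ⟨p.reverse, ?_⟩, ⟨s, h₃⟩⟩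
    rw [code_eq_reverse_flatMap_append] at h₁
    simpa using congrArg List.reverse (List.append_cancel_right h₁)
  · rintro ⟨W₁, W₂, rfl, ⟨x', hx⟩, ⟨y', hy⟩⟩
    refine ⟨x'.reverse, y', ?_⟩
    rw [code_append, code_append, K.code_eq_reverse_flatMap_append W₁.reverse,
      List.reverse_reverse, ← hx, ← hy]
    simp [code]

lemma code_infix_code {V W : List ι} (h : V <:+: W) : K.code V <:+: K.code W := by
  obtain ⟨p, s, rfl⟩ := h
  simpa using K.reverse_append_code_append_infix_code.2
    ⟨p.reverse, s, by simp, List.nil_prefix, List.nil_prefix⟩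

/-- A word is a proper prefix of some return word. -/
def IsProperPrefix (y : List Γ) : Prop := ∃ c, y <+: K.ret c ∧ y ≠ K.ret c

lemma isProperPrefix_of_append_singleton {y : List Γ} {b : Γ} {c : ι} (h : y ++ [b] <+: K.ret c) :
    K.IsProperPrefix y := by
  refine ⟨c, (List.prefix_append _ _).trans h, ?_⟩
  rintro rfl
  simpa using h.length_le

lemma append_singleton_prefix_flatMap_ret {y : List Γ} {b : Γ} {W : List ι}
    (hy : K.IsProperPrefix y) :
    y ++ [b] <+: W.flatMap K.ret ↔ ∃ c W', W = c :: W' ∧ y ++ [b] <+: K.ret c := by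
  constructor
  · intro h
    cases W with
    | nil => simp at h
    | cons c W =>
      refine ⟨c, W, rfl, ?_⟩
      rw [List.flatMap_cons] at h
      rcases List.prefix_or_prefix_of_prefix h (List.prefix_append _ _) with h | h
      · exact h
      rcases List.prefix_concat_iff.1 h with h | h
      · exact h ▸ List.prefix_rfl
      obtain ⟨c', hyc, hne⟩ := hy
      obtain rfl := K.ret_prefix _ _ (h.trans hyc)
      exact absurd (hyc.eq_of_length_le h.length_le) hne
  · rintro ⟨c, W', rfl, h⟩
    exact h.trans (List.prefix_append _ _)

lemma exists_eq_flatMap_ret_append [Nonempty ι] {u : List Γ} {W : List ι}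
    (h : u <+: W.flatMap K.ret) :
    ∃ (v : List ι) (y : List Γ), u = v.flatMap K.ret ++ y ∧ K.IsProperPrefix y := by
  induction W generalizing u with
  | nil =>
    obtain ⟨c⟩ := ‹Nonempty ι›
    exact ⟨[], [], by simpa using h, c, List.nil_prefix, (K.ret_ne_nil c).symm⟩
  | cons c W ih =>
    by_cases hc : K.ret c <+: u
    · obtain ⟨u, rfl⟩ := hc
      obtain ⟨v, y, rfl, hy⟩ := ih ((List.prefix_append_right_inj _).1 h)
      exact ⟨c :: v, y, by simp, hy⟩
    · refine ⟨[], u, rfl, c, ?_, fun huc ↦ hc (huc ▸ List.prefix_rfl)⟩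
      exact (List.prefix_or_prefix_of_prefix h (List.prefix_append _ _)).resolve_right hc

lemma exists_eq_reverse_append_code_append [Nonempty ι] {W : List ι} {u : List Γ}
    (h : u <:+: K.code W) (hm : K.marker <:+: u) :
    ∃ x v y, u = x.reverse ++ K.code v ++ y ∧ K.IsProperPrefix x ∧ K.IsProperPrefix y := by
  obtain ⟨p, s, rfl⟩ := hm
  obtain ⟨W₁, W₂, -, hp, hs⟩ := K.reverse_append_code_append_infix_code
    (x := p.reverse) (v := []) (y := s) |>.1 (by simpa [code] using h)
  obtain ⟨v₁, x, hx, hpx⟩ := K.exists_eq_flatMap_ret_append hp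
  obtain ⟨v₂, y, rfl, hpy⟩ := K.exists_eq_flatMap_ret_append hs
  refine ⟨x, v₁.reverse ++ v₂, y, ?_, hpx, hpy⟩
  obtain rfl := List.reverse_eq_iff.1 hx
  rw [code_append, code_eq_reverse_flatMap_append]
  simp

lemma infix_code_singleton [Nonempty ι] {W : List ι} {u : List Γ} (h : u <:+: K.code W)
    (hm : ¬ K.marker <:+: u) : ∃ c, u <:+: K.code [c] := by
  induction W with
  | nil =>
    obtain ⟨c⟩ := ‹Nonempty ι›
    exact ⟨c, h.trans ⟨[], K.ret c, by simp [code]⟩⟩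
  | cons c W ih =>
    rw [code_cons, code, ← List.append_assoc] at h
    rcases infix_append_append_cases h with h | h | h
    · exact absurd h hm
    · exact ⟨c, by rwa [code_cons, code, List.flatMap_nil, List.append_nil]⟩
    · exact ih h

/-- A necessary condition for being a factor of a code, decidable for a finite alphabet. -/
def LocallyAdmissible (u : List Γ) : Prop := K.marker <:+: u ∨ ∃ c, u <:+: K.code [c]

instance [DecidableEq Γ] [Fintype ι] (u : List Γ) : Decidable (K.LocallyAdmissible u) :=
  inferInstanceAs (Decidable (_ ∨ _))

section Language

variable {P : List ι → Prop}

/-- The factors of the codes of the words in `P`. -/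
def Lang (P : List ι → Prop) (u : List Γ) : Prop := ∃ W, P W ∧ u <:+: K.code W

lemma lang_factorClosed : FactorClosed (K.Lang P) := by
  rintro u u' h ⟨W, hW, hu⟩
  exact ⟨W, hW, h.trans hu⟩

lemma lang_reversalClosed (hP : ReversalClosed P) : ReversalClosed (K.Lang P) := by
  rintro u ⟨W, hW, hu⟩
  exact ⟨W.reverse, hP hW, by rw [← reverse_code]; exact List.reverse_infix.2 hu⟩

lemma Lang.locallyAdmissible [Nonempty ι] {u : List Γ} (h : K.Lang P u) :
    K.LocallyAdmissible u := by
  obtain ⟨W, -, hu⟩ := h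
  exact or_iff_not_imp_left.2 (K.infix_code_singleton hu)

/-- A necessary condition, decidable for finite alphabets, for being a weak bispecial factor
of a code. -/
def LocallyWeak (f : Γ → Bool) (u : List Γ) : Prop :=
  ∀ i, (∃ a, f a = i ∧ K.LocallyAdmissible (a :: u)) ∧
    ∃ b, f b = i ∧ K.LocallyAdmissible (u ++ [b])

instance [DecidableEq Γ] [Fintype ι] [Fintype Γ] (f : Γ → Bool) (u : List Γ) :
    Decidable (K.LocallyWeak f u) :=
  inferInstanceAs (Decidable (∀ _, _ ∧ _))

lemma locallyWeak_of_isWeak [Nonempty ι] {f : Γ → Bool} {u : List Γ}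
    (h : IsWeak (K.Lang P) f u) : K.LocallyWeak f u := by
  refine fun i ↦ ⟨?_, ?_⟩
  · obtain ⟨j, a, b, ha, -, hab⟩ := h.exists_right i
    exact ⟨a, ha, Lang.locallyAdmissible K (K.lang_factorClosed ⟨[], [b], rfl⟩ hab)⟩
  · obtain ⟨j, a, b, -, hb, hab⟩ := h.exists_left i
    exact ⟨b, hb, Lang.locallyAdmissible K (K.lang_factorClosed ⟨[a], [], by simp⟩ hab)⟩

lemma marker_infix_of_isWeak [Nonempty ι] {f : Γ → Bool}
    (hlocal : ∀ c, ∀ u ∈ factors (K.code [c]), ¬ K.marker <:+: u → K.LocallyWeak f u →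
      ∃ i j, HasExt (K.Lang P) f u i j ∧ HasExt (K.Lang P) f u i (!j))
    {u : List Γ} (h : IsWeak (K.Lang P) f u) : K.marker <:+: u := by
  by_contra hm
  obtain ⟨W, -, hW⟩ := h.mem K.lang_factorClosed
  obtain ⟨c, hc⟩ := K.infix_code_singleton hW hm
  obtain ⟨i, j, h₁, h₂⟩ := hlocal c u (mem_factors_of_infix hc) hm (K.locallyWeak_of_isWeak h)
  exact h.not_hasExt_not h₁ h₂

lemma lang_extension_iff (hP : FactorClosed P) {v : List ι} {x y : List Γ} {a b : Γ}
    (hx : K.IsProperPrefix x) (hy : K.IsProperPrefix y) :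
    K.Lang P (a :: (x.reverse ++ K.code v ++ y ++ [b])) ↔
      ∃ a' b', P (a' :: (v ++ [b'])) ∧ x ++ [a] <+: K.ret a' ∧ y ++ [b] <+: K.ret b' := by
  have hshape : a :: (x.reverse ++ K.code v ++ y ++ [b])
      = (x ++ [a]).reverse ++ K.code v ++ (y ++ [b]) := by simp
  rw [Lang, hshape]
  simp only [reverse_append_code_append_infix_code, K.append_singleton_prefix_flatMap_ret hx,
    K.append_singleton_prefix_flatMap_ret hy]
  constructor
  · rintro ⟨_, hW, _, _, rfl, ⟨a', W₁, rfl, ha⟩, ⟨b', W₂, rfl, hb⟩⟩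
    exact ⟨a', b', hP ⟨W₁.reverse, W₂, by simp⟩ hW, ha, hb⟩
  · rintro ⟨a', b', hv, ha, hb⟩
    exact ⟨_, hv, [a'], [b'], by simp, ⟨a', [], rfl, ha⟩, ⟨b', [], rfl, hb⟩⟩

end Language

end ReturnCode

/-- The alphabet of the return words to the markers `111` and `ABA`. -/
inductive Tri
  | A
  | B
  | C
  deriving DecidableEq, Inhabited

open Tri

instance : Fintype Tri := ⟨{A, B, C}, by rintro (_ | _ | _) <;> decide⟩

/-- The colour separating the letter `A` from `B` and `C`. -/
def isA (c : Tri) : Bool := decide (c = A)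

/-- A ternary return code together with a two-colouring of the target alphabet such that
distinct return words can first differ in colour only at their first letter or after the
prefix `fork`. -/
structure ForkedCode (Γ : Type*) extends ReturnCode Tri Γ where
  colour : Γ → Bool
  fork : List Γ
  /-- Whether the colour of the first letter of `ret c` is opposite to that of `c`. -/
  flip : Bool
  /-- The colour following `fork` in `ret B`. -/
  side : Bool
  colour_head : ∀ c b, [b] <+: ret c → colour b = xor flip (isA c)
  colour_fork : ∀ c b, fork ++ [b] <+: ret c → c ≠ A ∧ colour b = xor side (decide (c = C))
  exists_fork : ∀ c, c ≠ A → ∃ b, fork ++ [b] <+: ret c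
  eq_fork : ∀ c c', ∀ y ∈ (ret c).inits, ∀ b b', y ++ [b] <+: ret c → y ++ [b'] <+: ret c' →
    colour b ≠ colour b' → y = [] ∨ y = fork

/-- The return words to `ABA`. -/
def triCode : ForkedCode Tri where
  marker := [A, B, A]
  ret
    | A => [C, A, B, A]
    | B => [A, B, A]
    | C => [A, A, B, A]
  reverse_marker := by decide
  marker_append_ret := by decide
  ret_ne_nil := by decide
  ret_prefix := by decide
  marker_sync := by decide
  colour := isA
  fork := [A]
  flip := true
  side := false
  colour_head := by decide
  colour_fork := by decide
  exists_fork := by decide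
  eq_fork := by decide

/-- The return words to `111`. -/
def bitCode : ForkedCode Bool where
  marker := [true, true, true]
  ret
    | A => [true]
    | B => [false, true, true, true]
    | C => [false, true, false, true, true, true]
  reverse_marker := by decide
  marker_append_ret := by decide
  ret_ne_nil := by decide
  ret_prefix := by decide
  marker_sync := by decide
  colour := id
  fork := [false, true]
  flip := false
  side := true
  colour_head := by decide
  colour_fork := by decide
  exists_fork := by decide
  eq_fork := by decide

/-- Palindromic prefixes of the fixed word of `triCode`. -/
def triPal : ℕ → List Tri
  | 0 => []
  | 1 => [A]
  | n + 2 => triCode.code (triPal n)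

/-- The factors of the words `triPal n`. -/
def TriFactor (v : List Tri) : Prop := ∃ n, v <:+: triPal n

lemma triPal_prefix_triPal_succ : ∀ n, triPal n <+: triPal (n + 1)
  | 0 => List.nil_prefix
  | 1 => by decide
  | n + 2 => (List.prefix_append_right_inj _).2 ((triPal_prefix_triPal_succ n).flatMap _)

lemma triPal_prefix_triPal {m n : ℕ} (h : m ≤ n) : triPal m <+: triPal n := by
  induction h with
  | refl => exact List.prefix_rfl
  | step _ ih => exact ih.trans (triPal_prefix_triPal_succ _)

lemma reverse_triPal : ∀ n, (triPal n).reverse = triPal n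
  | 0 => rfl
  | 1 => rfl
  | n + 2 => by rw [triPal, triCode.reverse_code, reverse_triPal n]

lemma triFactor_factorClosed : FactorClosed TriFactor := by
  rintro v w h ⟨n, hn⟩
  exact ⟨n, h.trans hn⟩

lemma triFactor_reversalClosed : ReversalClosed TriFactor := by
  rintro v ⟨n, hn⟩
  exact ⟨n, by rw [← reverse_triPal]; exact List.reverse_infix.2 hn⟩

lemma lang_triFactor_iff {Γ : Type*} (K : ReturnCode Tri Γ) {u : List Γ} :
    K.Lang TriFactor u ↔ ∃ n, u <:+: K.code (triPal n) := by
  constructor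
  · rintro ⟨W, ⟨n, hW⟩, hu⟩
    exact ⟨n, hu.trans (K.code_infix_code hW)⟩
  · rintro ⟨n, hu⟩
    exact ⟨triPal n, ⟨n, List.infix_rfl⟩, hu⟩

lemma lang_triCode_triFactor : triCode.Lang TriFactor = TriFactor := by
  ext v
  rw [lang_triFactor_iff]
  constructor
  · rintro ⟨n, hv⟩
    exact ⟨n + 2, hv⟩
  · rintro ⟨n, hv⟩
    exact ⟨n, hv.trans (triPal_prefix_triPal (Nat.le_add_right n 2)).isInfix⟩

lemma TriFactor.locallyAdmissible {v : List Tri} (h : TriFactor v) :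
    triCode.LocallyAdmissible v := by
  rw [← lang_triCode_triFactor] at h
  exact h.locallyAdmissible

lemma eq_A_of_triFactor_pair {a b : Tri} (hb : b ≠ A) (h : TriFactor [a, b]) : a = A := by
  have hlocal : ∀ a b, b ≠ A → triCode.LocallyAdmissible [a, b] → a = A := by decide
  exact hlocal a b hb h.locallyAdmissible

lemma eq_nil_or_eq_A_of_triFactor_append {v : List Tri} (hB : TriFactor (v ++ [B]))
    (hC : TriFactor (v ++ [C])) : v = [] ∨ v = [A] := by
  have hlocal : ∀ a b, triCode.LocallyAdmissible [a, b, B] →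
    ¬ triCode.LocallyAdmissible [a, b, C] := by decide
  induction v using List.reverseRecOn with
  | nil => exact Or.inl rfl
  | append_singleton v b _ =>
  induction v using List.reverseRecOn with
  | nil =>
    have hbA : b = A := eq_A_of_triFactor_pair (b := B) (by decide) (by simpa using hB)
    exact Or.inr (congrArg ([·]) hbA)
  | append_singleton v a _ =>
    have last_three {c : Tri} (h : TriFactor (v ++ [a] ++ [b] ++ [c])) :
        triCode.LocallyAdmissible [a, b, c] :=
      (triFactor_factorClosed ⟨v, [], by simp⟩ h).locallyAdmissible
    exact absurd (last_three hC) (hlocal a b (last_three hB))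

namespace ForkedCode

variable {Γ : Type*} (K : ForkedCode Γ) {v : List Tri} {x y : List Γ} {i j : Bool}

lemma isProperPrefix_nil : K.IsProperPrefix [] := ⟨A, List.nil_prefix, (K.ret_ne_nil A).symm⟩

lemma isProperPrefix_fork : K.IsProperPrefix K.fork :=
  let ⟨_, h⟩ := K.exists_fork B (by decide)
  K.isProperPrefix_of_append_singleton h

lemma exists_head (c : Tri) : ∃ b, [b] <+: K.ret c := by
  obtain ⟨b, l, h⟩ := List.exists_cons_of_ne_nil (K.ret_ne_nil c)
  exact ⟨b, l, h.symm⟩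

lemma hasExt_code {P : List Tri → Prop} (hP : FactorClosed P) :
    HasExt (K.Lang P) K.colour (K.code v) i j ↔ HasExt P isA v (xor K.flip i) (xor K.flip j) := by
  have hext (a b : Γ) : K.Lang P (a :: (K.code v ++ [b])) ↔
      ∃ a' b', P (a' :: (v ++ [b'])) ∧ [a] <+: K.ret a' ∧ [b] <+: K.ret b' := by
    simpa using K.lang_extension_iff hP (v := v) (a := a) (b := b)
      K.isProperPrefix_nil K.isProperPrefix_nil
  constructor
  · rintro ⟨a, b, rfl, rfl, h⟩
    obtain ⟨a', b', h, ha, hb⟩ := (hext a b).1 h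
    exact ⟨a', b', by simp [K.colour_head _ _ ha], by simp [K.colour_head _ _ hb], h⟩
  · rintro ⟨a', b', ha', hb', h⟩
    obtain ⟨a, ha⟩ := K.exists_head a'
    obtain ⟨b, hb⟩ := K.exists_head b'
    refine ⟨a, b, ?_, ?_, (hext a b).2 ⟨a', b', h, ha, hb⟩⟩
    · simp [K.colour_head _ _ ha, ha']
    · simp [K.colour_head _ _ hb, hb']

lemma isWeak_code {P : List Tri → Prop} (hP : FactorClosed P) :
    IsWeak (K.Lang P) K.colour (K.code v) ↔ IsWeak P isA v := by
  have hxor (t i j : Bool) : xor (xor t i) (xor t j) = xor i j := by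
    cases t <;> simp
  refine exists_congr fun s ↦ ⟨fun h i j ↦ ?_, fun h i j ↦ ?_⟩
  · simpa [K.hasExt_code hP, hxor] using h (xor K.flip i) (xor K.flip j)
  · rw [K.hasExt_code hP, h, hxor]

lemma isStrong_code {P : List Tri → Prop} (hP : FactorClosed P) (h : IsStrong P isA v) :
    IsStrong (K.Lang P) K.colour (K.code v) := fun _ _ ↦ (K.hasExt_code hP).2 (h _ _)

lemma hasExt_append_fork {a c : Tri} (h : TriFactor (a :: (v ++ [c]))) (hc : c ≠ A) :
    HasExt (K.Lang TriFactor) K.colour (K.code v ++ K.fork) (xor K.flip (isA a))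
      (xor K.side (decide (c = C))) := by
  obtain ⟨a', ha'⟩ := K.exists_head a
  obtain ⟨c', hc'⟩ := K.exists_fork c hc
  refine ⟨a', c', K.colour_head _ _ ha', (K.colour_fork _ _ hc').2, ?_⟩
  simpa using (K.lang_extension_iff triFactor_factorClosed K.isProperPrefix_nil
    K.isProperPrefix_fork).2 ⟨a, c, h, by simpa using ha', hc'⟩

lemma eq_nil_or_eq_A_of_isWeak_append_fork (hx : K.IsProperPrefix x)
    (h : IsWeak (K.Lang TriFactor) K.colour (x.reverse ++ K.code v ++ K.fork)) :
    v = [] ∨ v = [A] := by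
  have hext (e : Tri) (hd : e ≠ A) : TriFactor (v ++ [e]) := by
    obtain ⟨-, a, b, -, hb, hab⟩ := h.exists_left (xor K.side (decide (e = C)))
    obtain ⟨a', c, hac, -, hc⟩ :=
      (K.lang_extension_iff triFactor_factorClosed hx K.isProperPrefix_fork).1 hab
    obtain ⟨hcA, hcolour⟩ := K.colour_fork c b hc
    obtain rfl : c = e := by
      rw [hb, Bool.xor_right_inj] at hcolour
      cases c <;> cases e <;> simp_all
    exact triFactor_factorClosed (List.suffix_cons _ _).isInfix hac
  exact eq_nil_or_eq_A_of_triFactor_append (hext B (by decide)) (hext C (by decide))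

lemma hasExt_nil_append_fork (hx : K.IsProperPrefix x)
    (h : HasExt (K.Lang TriFactor) K.colour (x.reverse ++ K.code [] ++ K.fork) i j) :
    ∃ a, K.colour a = i ∧ x ++ [a] <+: K.ret A := by
  obtain ⟨a, b, ha, -, hab⟩ := h
  obtain ⟨a', c, hac, ha', hc⟩ :=
    (K.lang_extension_iff triFactor_factorClosed hx K.isProperPrefix_fork).1 hab
  obtain rfl := eq_A_of_triFactor_pair (K.colour_fork c b hc).1 hac
  exact ⟨a, ha, ha'⟩

lemma not_isWeak_code_append_fork :
    ¬ IsWeak (K.Lang TriFactor) K.colour (K.code v ++ K.fork) := by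
  intro h
  have h' : IsWeak (K.Lang TriFactor) K.colour ([].reverse ++ K.code v ++ K.fork) := h
  rcases K.eq_nil_or_eq_A_of_isWeak_append_fork K.isProperPrefix_nil h' with rfl | rfl
  · obtain ⟨j, hj⟩ := h'.exists_right K.flip
    obtain ⟨a, ha, haA⟩ := K.hasExt_nil_append_fork K.isProperPrefix_nil hj
    have := K.colour_head A a haA
    simp [ha, isA] at this
  · have hCAB := K.hasExt_append_fork (a := C) (v := [A]) (c := B) ⟨5, by decide⟩ (by decide)
    have hBAC := K.hasExt_append_fork (a := B) (v := [A]) (c := C) ⟨5, by decide⟩ (by decide)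
    exact h.not_hasExt_not hCAB (by simpa [isA] using hBAC)

lemma eq_nil_or_eq_fork_of_isWeak (hx : K.IsProperPrefix x) (hy : K.IsProperPrefix y)
    (h : IsWeak (K.Lang TriFactor) K.colour (x.reverse ++ K.code v ++ y)) :
    y = [] ∨ y = K.fork := by
  have hext (j : Bool) : ∃ b c, K.colour b = j ∧ y ++ [b] <+: K.ret c := by
    obtain ⟨-, a, b, -, hb, hab⟩ := h.exists_left j
    obtain ⟨-, c, -, -, hc⟩ := (K.lang_extension_iff triFactor_factorClosed hx hy).1 hab
    exact ⟨b, c, hb, hc⟩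
  obtain ⟨b, c, hb, hc⟩ := hext true
  obtain ⟨b', c', hb', hc'⟩ := hext false
  refine K.eq_fork c c' y ?_ b b' hc hc' (by simp [hb, hb'])
  exact (List.mem_inits _ _).2 ((List.prefix_append _ _).trans hc)

theorem eq_code_of_isWeak {w : List Γ} (h : IsWeak (K.Lang TriFactor) K.colour w)
    (hm : K.marker <:+: w) :
    w = K.fork.reverse ++ K.code [A] ++ K.fork ∨ ∃ v, w = K.code v ∧ IsWeak TriFactor isA v := by
  obtain ⟨W, -, hW⟩ := h.mem K.lang_factorClosed
  obtain ⟨x, v, y, rfl, hx, hy⟩ := K.exists_eq_reverse_append_code_append hW hm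
  have hrev := h.reverse (K.lang_reversalClosed triFactor_reversalClosed)
  simp only [List.reverse_append, List.reverse_reverse, K.reverse_code, ← List.append_assoc]
    at hrev
  rcases K.eq_nil_or_eq_fork_of_isWeak hx hy h with rfl | rfl <;>
    rcases K.eq_nil_or_eq_fork_of_isWeak hy hx hrev with rfl | rfl
  · rw [List.reverse_nil, List.nil_append, List.append_nil] at h ⊢
    exact Or.inr ⟨v, rfl, (K.isWeak_code triFactor_factorClosed).1 h⟩
  · exact absurd hrev K.not_isWeak_code_append_fork
  · exact absurd h K.not_isWeak_code_append_fork
  · rcases K.eq_nil_or_eq_A_of_isWeak_append_fork hx h with rfl | rfl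
    · obtain ⟨j, hj⟩ := h.exists_right true
      obtain ⟨a, -, haA⟩ := K.hasExt_nil_append_fork hx hj
      exact absurd rfl (K.colour_fork A a haA).1
    · exact Or.inl rfl

end ForkedCode

/-- The central letter of the palindrome `triPal (2 * k + 1)`. -/
def centre (k : ℕ) : Tri := if Even k then A else C

lemma ret_centre (k : ℕ) : triCode.ret (centre k) = centre (k + 1) :: triCode.marker := by
  by_cases hk : Even k <;> simp [centre, Nat.even_add_one, hk, triCode]

lemma triPal_two_mul_add_one (k : ℕ) :
    triPal (2 * k + 1) = triPal (2 * k) ++ centre k :: triPal (2 * k) := by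
  induction k with
  | zero => rfl
  | succ k ih =>
    have hodd : triPal (2 * (k + 1) + 1) = triCode.code (triPal (2 * k + 1)) := rfl
    have heven : triPal (2 * (k + 1)) = triCode.code (triPal (2 * k)) := rfl
    rw [hodd, ih, heven, triCode.code_append, List.flatMap_cons, ret_centre]
    rfl

/-- The weak bispecial words for `TriFactor` and the colouring `isA`. -/
def triWeak (k : ℕ) : List Tri :=
  triPal (2 * k) ++ centre k :: (triPal (2 * k + 3) ++ centre k :: triPal (2 * k))

lemma code_triWeak (k : ℕ) : triCode.code (triWeak k) = triWeak (k + 1) := by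
  have hr (n : ℕ) : triCode.code (triPal n) = triPal (n + 2) := rfl
  have hmarker (W : List Tri) : triCode.marker ++ W.flatMap triCode.ret = triCode.code W := rfl
  rw [triWeak, triCode.code_append, List.flatMap_cons, List.flatMap_append, List.flatMap_cons,
    ret_centre, hr, List.cons_append, ← List.append_assoc triCode.marker, hmarker,
    List.cons_append, hmarker, hr, hr]
  rfl

lemma triCode_marker_infix_of_isWeak {v : List Tri} (h : IsWeak TriFactor isA v) :
    triCode.marker <:+: v := by
  have hlocal : ∀ c, ∀ u ∈ factors (triCode.code [c]), ¬ triCode.marker <:+: u →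
      triCode.LocallyWeak isA u →
      ∃ i j, HasExt (· <:+: triPal 5) isA u i j ∧ HasExt (· <:+: triPal 5) isA u i (!j) := by decide
  have hr (w : List Tri) (hw : w <:+: triPal 5) : TriFactor w := ⟨5, hw⟩
  rw [← lang_triCode_triFactor] at h hr
  refine triCode.marker_infix_of_isWeak (fun c u hu hm hweak ↦ ?_) h
  obtain ⟨i, j, h₁, h₂⟩ := hlocal c u hu hm hweak
  exact ⟨i, j, h₁.mono hr, h₂.mono hr⟩

theorem exists_eq_triWeak_of_isWeak {v : List Tri} (h : IsWeak TriFactor isA v) :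
    ∃ k, v = triWeak k := by
  induction hn : v.length using Nat.strong_induction_on generalizing v with
  | _ n ih =>
  subst hn
  have hm := triCode_marker_infix_of_isWeak h
  have hcode : IsWeak (triCode.Lang TriFactor) triCode.colour v := by
    rwa [lang_triCode_triFactor]
  rcases triCode.eq_code_of_isWeak hcode hm with rfl | ⟨v, rfl, hv⟩
  · exact ⟨0, rfl⟩
  · have hshorter : v.length < (triCode.code v).length := by
      have hmarker : triCode.marker.length = 3 := rfl
      have := triCode.length_le_length_flatMap_ret v
      rw [ReturnCode.code, List.length_append]
      omega
    obtain ⟨k, rfl⟩ := ih _ hshorter hv rfl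
    exact ⟨k + 1, code_triWeak k⟩

lemma isStrong_triPal_odd (k : ℕ) : IsStrong TriFactor isA (triPal (2 * k + 1)) := by
  induction k with
  | zero =>
    have hlocal : ∀ i j, HasExt (· <:+: triPal 5) isA [A] i j := by decide
    exact fun i j ↦ (hlocal i j).mono fun w hw ↦ ⟨5, hw⟩
  | succ k ih =>
    have := triCode.isStrong_code triFactor_factorClosed ih
    rwa [lang_triCode_triFactor] at this

/-- The palindromes whose partial sums modulo 2 are the words `wp (n + 2)`. -/
def bitPal (n : ℕ) : List Bool := bitCode.code (triPal n)

/-- The factors of the words `bitPal n`. -/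
def BitFactor (v : List Bool) : Prop := ∃ n, v <:+: bitPal n

lemma lang_bitCode_triFactor : bitCode.Lang TriFactor = BitFactor :=
  funext fun _ ↦ propext (lang_triFactor_iff bitCode.toReturnCode)

lemma bitCode_marker_infix_of_isWeak {v : List Bool} (h : IsWeak BitFactor id v) :
    bitCode.marker <:+: v := by
  have hlocal : ∀ c, ∀ u ∈ factors (bitCode.code [c]), ¬ bitCode.marker <:+: u →
      bitCode.LocallyWeak id u →
      ∃ i j, HasExt (· <:+: bitPal 3) id u i j ∧ HasExt (· <:+: bitPal 3) id u i (!j) := by decide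
  have hd (w : List Bool) (hw : w <:+: bitPal 3) : BitFactor w := ⟨3, hw⟩
  rw [← lang_bitCode_triFactor] at h hd
  refine bitCode.marker_infix_of_isWeak (fun c u hu hm hweak ↦ ?_) h
  obtain ⟨i, j, h₁, h₂⟩ := hlocal c u hu hm hweak
  exact ⟨i, j, h₁.mono hd, h₂.mono hd⟩

theorem eq_of_isWeak_bitFactor {v : List Bool} (h : IsWeak BitFactor id v) :
    v = [true, false, true, true, true, true, false, true] ∨ ∃ k, v = bitCode.code (triWeak k) := by
  have hm := bitCode_marker_infix_of_isWeak h
  rw [← lang_bitCode_triFactor] at h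
  rcases bitCode.eq_code_of_isWeak h hm with rfl | ⟨v, rfl, hv⟩
  · exact Or.inl rfl
  · obtain ⟨k, rfl⟩ := exists_eq_triWeak_of_isWeak hv
    exact Or.inr ⟨k, rfl⟩

lemma isStrong_bitPal_odd (k : ℕ) : IsStrong BitFactor id (bitPal (2 * k + 1)) := by
  rw [← lang_bitCode_triFactor]
  exact bitCode.isStrong_code triFactor_factorClosed (isStrong_triPal_odd k)

section Complexity

variable {α : Type*}

/-- The number of words of length `n` in `P`. -/
noncomputable def complexity (P : List α → Prop) (n : ℕ) : ℕ := {v | P v ∧ v.length = n}.ncard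

lemma complexity_zero {P : List α → Prop} (h : P []) : complexity P 0 = 1 := by
  have hset : {v | P v ∧ v.length = 0} = {[]} := by
    ext v
    exact ⟨fun hv ↦ List.length_eq_zero_iff.1 hv.2, by rintro rfl; exact ⟨h, rfl⟩⟩
  rw [complexity, hset, Set.ncard_singleton]

/-- The second difference of a sequence of natural numbers. -/
def secondDiff (c : ℕ → ℕ) (n : ℕ) : ℤ := c (n + 2) - 2 * c (n + 1) + c n

open Classical in
/-- The indicator function of a set of words. -/
noncomputable def indicator (P : List α → Prop) (v : List α) : ℤ := if P v then 1 else 0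

variable [Fintype α]

variable (α) in
/-- The finite set of words of length `n` over `α`. -/
noncomputable def wordsOfLength (n : ℕ) : Finset (List α) := (List.finite_length_eq α n).toFinset

@[simp]
lemma mem_wordsOfLength {n : ℕ} {w : List α} : w ∈ wordsOfLength α n ↔ w.length = n := by
  simp [wordsOfLength]

lemma wordsOfLength_zero : wordsOfLength α 0 = {[]} := by
  ext w
  rw [mem_wordsOfLength, Finset.mem_singleton, List.length_eq_zero_iff]

lemma sum_wordsOfLength_succ (n : ℕ) (g : List α → ℤ) :
    ∑ w ∈ wordsOfLength α (n + 1), g w = ∑ v ∈ wordsOfLength α n, ∑ a, g (a :: v) := by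
  rw [← Finset.sum_product']
  symm
  refine Finset.sum_nbij (fun x ↦ x.2 :: x.1) (fun x hx ↦ by simpa using hx) ?_ ?_ fun _ _ ↦ rfl
  · rintro ⟨v, a⟩ - ⟨v', a'⟩ - h
    simp_all
  · rintro (_ | ⟨a, v⟩) h
    · simp at h
    · exact ⟨(v, a), by simpa using h, rfl⟩

lemma sum_wordsOfLength_reverse (n : ℕ) (g : List α → ℤ) :
    ∑ w ∈ wordsOfLength α n, g w.reverse = ∑ w ∈ wordsOfLength α n, g w :=
  Finset.sum_nbij' List.reverse List.reverse (by simp) (by simp) (by simp) (by simp) (by simp)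

lemma sum_wordsOfLength_succ' (n : ℕ) (g : List α → ℤ) :
    ∑ w ∈ wordsOfLength α (n + 1), g w = ∑ v ∈ wordsOfLength α n, ∑ b, g (v ++ [b]) := by
  rw [← sum_wordsOfLength_reverse, sum_wordsOfLength_succ, ← sum_wordsOfLength_reverse]
  simp only [List.reverse_cons, List.reverse_reverse]

lemma complexity_eq_sum (P : List α → Prop) (n : ℕ) :
    (complexity P n : ℤ) = ∑ v ∈ wordsOfLength α n, indicator P v := by
  classical
  have hset : {v | P v ∧ v.length = n} = ((wordsOfLength α n).filter P : Set (List α)) := by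
    ext v
    simp [and_comm]
  simp only [complexity, hset, Set.ncard_coe_finset, Finset.card_filter, indicator, Nat.cast_sum,
    Nat.cast_ite, Nat.cast_one, Nat.cast_zero]

/-- The bilateral multiplicity of `v` in `P`. -/
noncomputable def bilateral (P : List α → Prop) (v : List α) : ℤ :=
  ∑ a, ∑ b, indicator P (a :: (v ++ [b])) - ∑ a, indicator P (a :: v)
    - ∑ b, indicator P (v ++ [b]) + indicator P v

theorem secondDiff_complexity (P : List α → Prop) (n : ℕ) :
    secondDiff (complexity P) n = ∑ v ∈ wordsOfLength α n, bilateral P v := by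
  have htwo : (complexity P (n + 2) : ℤ)
      = ∑ v ∈ wordsOfLength α n, ∑ a, ∑ b, indicator P (a :: (v ++ [b])) := by
    rw [complexity_eq_sum, sum_wordsOfLength_succ, sum_wordsOfLength_succ']
    exact Finset.sum_congr rfl fun v _ ↦ Finset.sum_comm
  simp only [bilateral, Finset.sum_add_distrib, Finset.sum_sub_distrib, ← htwo,
    ← sum_wordsOfLength_succ, ← sum_wordsOfLength_succ', ← complexity_eq_sum, secondDiff]
  ring

end Complexity

/-- Every word of `P` extends in `P` to the left and to the right. -/
def Biextendable {α : Type*} (P : List α → Prop) : Prop :=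
  ∀ ⦃v⦄, P v → (∃ a, P (a :: v)) ∧ ∃ b, P (v ++ [b])

section Binary

variable {P : List Bool → Prop}

lemma hasExt_id {v : List Bool} {i j : Bool} : HasExt P id v i j ↔ P (i :: (v ++ [j])) := by
  simp [HasExt]

theorem bilateral_bounds (hP : FactorClosed P) (hext : Biextendable P) (v : List Bool) :
    -1 ≤ bilateral P v ∧ (¬ IsWeak P id v → 0 ≤ bilateral P v) ∧
      (IsStrong P id v → 1 ≤ bilateral P v) := by
  have hright (w) : P w ↔ P (w ++ [false]) ∨ P (w ++ [true]) := by
    rw [← Bool.exists_bool (p := fun b ↦ P (w ++ [b]))]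
    exact ⟨fun h ↦ (hext h).2, fun ⟨_, h⟩ ↦ hP (List.prefix_append _ _).isInfix h⟩
  have hleft (w) : P w ↔ P (false :: w) ∨ P (true :: w) := by
    rw [← Bool.exists_bool (p := fun a ↦ P (a :: w))]
    exact ⟨fun h ↦ (hext h).1, fun ⟨_, h⟩ ↦ hP (List.suffix_cons _ _).isInfix h⟩
  have hv := hleft v
  rw [hright (false :: v), hright (true :: v)] at hv
  simp only [IsWeak, IsStrong, hasExt_id, bilateral, indicator, Fintype.sum_bool, Bool.forall_bool,
    Bool.exists_bool]
  by_cases h₁ : P (true :: (v ++ [true])) <;> by_cases h₂ : P (true :: (v ++ [false])) <;>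
    by_cases h₃ : P (false :: (v ++ [true])) <;> by_cases h₄ : P (false :: (v ++ [false])) <;>
    simp [hv, hright (_ :: v), hleft (v ++ _), h₁, h₂, h₃, h₄]

lemma bilateral_le_secondDiff (hP : FactorClosed P) (hext : Biextendable P) {n : ℕ} (u : List Bool)
    (hu : u.length = n) (hweak : ∀ v, v.length = n → IsWeak P id v → v = u) :
    bilateral P u ≤ secondDiff (complexity P) n := by
  rw [secondDiff_complexity, ← Finset.add_sum_erase _ _ (mem_wordsOfLength.2 hu)]
  refine le_add_of_nonneg_right (Finset.sum_nonneg fun v hv ↦ ?_)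
  obtain ⟨hne, hlen⟩ := Finset.mem_erase.1 hv
  exact (bilateral_bounds hP hext v).2.1 fun h ↦ hne (hweak v (mem_wordsOfLength.1 hlen) h)

end Binary

/-- The sum of a binary word modulo 2. -/
def parity (l : List Bool) : Bool := l.foldr xor false

lemma parity_cons (a : Bool) (l : List Bool) : parity (a :: l) = xor a (parity l) := rfl

lemma parity_append (l m : List Bool) : parity (l ++ m) = xor (parity l) (parity m) := by
  induction l with
  | nil => simp [parity]
  | cons a l ih => rw [List.cons_append, parity_cons, parity_cons, ih, Bool.xor_assoc]

lemma parity_reverse (l : List Bool) : parity l.reverse = parity l := by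
  induction l with
  | nil => rfl
  | cons a l ih =>
    rw [List.reverse_cons, parity_append, ih, Bool.xor_comm]
    simp [parity]

lemma parity_flatMap_congr {ι : Type*} {f g : ι → List Bool}
    (h : ∀ c, parity (f c) = parity (g c)) (W : List ι) :
    parity (W.flatMap f) = parity (W.flatMap g) := by
  induction W with
  | nil => rfl
  | cons c W ih => rw [List.flatMap_cons, List.flatMap_cons, parity_append, parity_append, h, ih]

lemma parity_bitPal_add_two (n : ℕ) : parity (bitPal (n + 2)) = !parity (bitPal n) := by
  have hret : ∀ c, parity ((triCode.ret c).flatMap bitCode.ret) = parity (bitCode.ret c) := by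
    decide
  have hmarker : parity (triCode.marker.flatMap bitCode.ret) = true := by decide
  rw [bitPal, bitPal, triPal, ReturnCode.code, ReturnCode.code, ReturnCode.code,
    List.flatMap_append, List.flatMap_assoc, parity_append, parity_append, parity_append,
    parity_flatMap_congr hret, hmarker, Bool.true_xor, Bool.xor_not]

lemma parity_bitPal : ∀ n, parity (bitPal n) = decide (n % 4 = 0 ∨ n % 4 = 3)
  | 0 => by decide
  | 1 => by decide
  | n + 2 => by
    rw [parity_bitPal_add_two, parity_bitPal n, ← decide_not]
    exact decide_eq_decide.2 (by omega)

lemma parity_bitPal_even (k : ℕ) : parity (bitPal (2 * k)) = decide (Even k) := by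
  rw [parity_bitPal]
  exact decide_eq_decide.2 (by rw [Nat.even_iff]; omega)

lemma exists_triPal_succ_eq_append :
    ∀ n, ∃ c s, triPal (n + 1) = triPal n ++ c :: s ∧ isA c = parity (bitPal n)
  | 0 => ⟨A, [], rfl, rfl⟩
  | 1 => ⟨B, [A], rfl, rfl⟩
  | n + 2 => by
    obtain ⟨c, s, hr, hc⟩ := exists_triPal_succ_eq_append n
    obtain ⟨b, t, hb⟩ := triCode.exists_head c
    refine ⟨b, t ++ s.flatMap triCode.ret, ?_, ?_⟩
    · have hodd : triPal (n + 2 + 1) = triCode.code (triPal (n + 1)) := rfl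
      rw [hodd, hr, triCode.code_append, List.flatMap_cons, ← hb]
      rfl
    · rw [parity_bitPal_add_two, ← hc]
      exact (triCode.colour_head c b ⟨t, hb⟩).trans (Bool.true_xor _)

lemma bitPal_append_parity_prefix (n : ℕ) : bitPal n ++ [parity (bitPal n)] <+: bitPal (n + 1) := by
  obtain ⟨c, s, hr, hc⟩ := exists_triPal_succ_eq_append n
  obtain ⟨b, t, hb⟩ := bitCode.exists_head c
  obtain rfl : b = parity (bitPal n) := by
    rw [← hc]
    exact (bitCode.colour_head c b ⟨t, hb⟩).trans (Bool.false_xor _)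
  refine ⟨t ++ s.flatMap bitCode.ret, ?_⟩
  rw [bitPal, bitPal, hr, bitCode.code_append, List.flatMap_cons, ← hb]
  simp [bitPal]

lemma bitPal_prefix_bitPal {m n : ℕ} (h : m ≤ n) : bitPal m <+: bitPal n := by
  induction h with
  | refl => exact List.prefix_rfl
  | step _ ih => exact ih.trans ((List.prefix_append _ _).trans (bitPal_append_parity_prefix _))

lemma length_bitPal_strictMono : StrictMono fun n ↦ (bitPal n).length := by
  refine strictMono_nat_of_lt_succ fun n ↦ ?_
  have := (bitPal_append_parity_prefix n).length_le
  rwa [List.length_append, List.length_singleton] at this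

lemma reverse_bitPal (n : ℕ) : (bitPal n).reverse = bitPal n := by
  rw [bitPal, bitCode.reverse_code, reverse_triPal]

lemma bitFactor_factorClosed : FactorClosed BitFactor := by
  rintro v w h ⟨n, hn⟩
  exact ⟨n, h.trans hn⟩

lemma bitFactor_reversalClosed : ReversalClosed BitFactor := by
  rintro v ⟨n, hn⟩
  exact ⟨n, by rw [← reverse_bitPal]; exact List.reverse_infix.2 hn⟩

lemma bitFactor_biextendable : Biextendable BitFactor := by
  have hright {v : List Bool} (h : BitFactor v) : ∃ b, BitFactor (v ++ [b]) := by
    obtain ⟨n, p, s, h⟩ := h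
    obtain ⟨b, s', hs⟩ : ∃ b s', s ++ [parity (bitPal n)] = b :: s' :=
      List.exists_cons_of_ne_nil (by simp)
    have h₁ : p ++ v ++ (s ++ [parity (bitPal n)]) = bitPal n ++ [parity (bitPal n)] := by
      rw [← List.append_assoc, h]
    refine ⟨b, n + 1, List.IsInfix.trans ⟨p, s', ?_⟩ (bitPal_append_parity_prefix n).isInfix⟩
    rw [← h₁, hs]
    simp
  refine fun v h ↦ ⟨?_, hright h⟩
  obtain ⟨b, hb⟩ := hright (bitFactor_reversalClosed h)
  exact ⟨b, by simpa using bitFactor_reversalClosed hb⟩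

lemma length_bitPal_two_mul_add_one (k : ℕ) :
    (bitPal (2 * k + 1)).length + 3
      = 2 * (bitPal (2 * k)).length + (bitCode.ret (centre k)).length := by
  have hcode := bitCode.length_code_append (triPal (2 * k)) (centre k :: triPal (2 * k))
  rw [← triPal_two_mul_add_one, bitCode.length_code_cons] at hcode
  change (bitPal (2 * k + 1)).length + 3
    = (bitPal (2 * k)).length + (_ + (bitPal (2 * k)).length) at hcode
  omega

lemma exists_triPal_add_three_eq_append (k : ℕ) :
    ∃ h, triPal (2 * k + 3) = triPal (2 * k) ++ h ∧
      triPal (2 * k + 4) = triPal (2 * k + 3) ++ h := by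
  induction k with
  | zero => exact ⟨triPal 3, rfl, rfl⟩
  | succ k ih =>
    obtain ⟨h, h₃, h₄⟩ := ih
    exact ⟨h.flatMap triCode.ret, (congrArg triCode.code h₃).trans (triCode.code_append _ _),
      (congrArg triCode.code h₄).trans (triCode.code_append _ _)⟩

lemma length_bitPal_add_four (k : ℕ) :
    (bitPal (2 * k + 4)).length + (bitPal (2 * k)).length = 2 * (bitPal (2 * k + 3)).length := by
  obtain ⟨h, h₃, h₄⟩ := exists_triPal_add_three_eq_append k
  have hlen₃ := bitCode.length_code_append (triPal (2 * k)) h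
  have hlen₄ := bitCode.length_code_append (triPal (2 * k + 3)) h
  rw [← h₃] at hlen₃
  rw [← h₄] at hlen₄
  simp only [bitPal]
  omega

lemma length_code_triWeak (k : ℕ) :
    (bitCode.code (triWeak k)).length + 2 * (bitPal (2 * k)).length
      = (bitPal (2 * k + 3)).length + 2 * (bitPal (2 * k + 1)).length := by
  have houter := bitCode.length_code_append (triPal (2 * k))
    (centre k :: (triPal (2 * k + 3) ++ centre k :: triPal (2 * k)))
  have hinner := bitCode.length_code_append (triPal (2 * k + 3)) (centre k :: triPal (2 * k))
  rw [bitCode.length_code_cons] at houter hinner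
  have hd := length_bitPal_two_mul_add_one k
  have hmarker : bitCode.marker.length = 3 := rfl
  simp only [bitPal, triWeak] at hd ⊢
  omega

namespace ReturnCode

variable {ι Γ : Type*} (K : ReturnCode ι Γ)

lemma code_injective : Function.Injective K.code := by
  intro V W h
  obtain ⟨V', rfl, hV'⟩ := K.flatMap_ret_eq_append (W := W) (v := V) (s := [])
    (by simpa [code] using h.symm)
  have := K.length_le_length_flatMap_ret V'
  rw [← hV', List.length_nil, Nat.le_zero, List.length_eq_zero_iff] at this
  rw [this, List.append_nil]

lemma exists_eq_code_of_palindrome_prefix {z : List Γ} {W : List ι} (hz : z <+: K.code W)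
    (hpal : z.reverse = z) (hlen : K.marker.length ≤ z.length) :
    ∃ V, V <+: W ∧ V.reverse = V ∧ z = K.code V := by
  obtain ⟨s, rfl⟩ := List.prefix_of_prefix_length_le (List.prefix_append _ _) hz hlen
  rw [List.reverse_append, K.reverse_marker] at hpal
  obtain ⟨t, ht⟩ := hz
  rw [← hpal] at ht ⊢
  obtain ⟨V, W', rfl, hV, -⟩ := K.code_eq_append_marker_append ht.symm
  refine ⟨V, List.prefix_append _ _, K.code_injective ?_, hV⟩
  rw [← K.reverse_code, ← hV, List.reverse_append, K.reverse_marker, List.reverse_reverse, hpal]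

end ReturnCode

lemma exists_eq_triPal_of_palindrome_prefix :
    ∀ {n : ℕ} {z : List Tri}, z <+: triPal n → z.reverse = z → ∃ j ≤ n, z = triPal j
  | 0, z, hz, _ => ⟨0, le_rfl, List.prefix_nil.1 hz⟩
  | 1, z, hz, _ => by
    rcases List.prefix_concat_iff.1 (show z <+: [] ++ [A] from hz) with rfl | hz
    · exact ⟨1, le_rfl, rfl⟩
    · exact ⟨0, zero_le_one, List.prefix_nil.1 hz⟩
  | n + 2, z, hz, hpal => by
    rcases le_or_gt triCode.marker.length z.length with hlen | hlen
    · obtain ⟨V, hV, hVpal, rfl⟩ := triCode.exists_eq_code_of_palindrome_prefix hz hpal hlen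
      obtain ⟨j, hj, rfl⟩ := exists_eq_triPal_of_palindrome_prefix hV hVpal
      exact ⟨j + 2, by omega, rfl⟩
    · have hshort : ∀ z ∈ triCode.marker.inits, z.length < triCode.marker.length →
        z.reverse = z → z = triPal 0 ∨ z = triPal 1 := by decide
      have hmarker := List.prefix_of_prefix_length_le hz (List.prefix_append _ _) hlen.le
      rcases hshort z ((List.mem_inits _ _).2 hmarker) hlen hpal with rfl | rfl
      · exact ⟨0, by omega, rfl⟩
      · exact ⟨1, by omega, rfl⟩

lemma palindrome_prefix_cases {n : ℕ} {x : List Bool} (hpal : x.reverse = x)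
    (hx : x ++ [parity (bitPal n)] <+: bitPal n) :
    (x.length ≤ 2 ∧ parity (bitPal n) = true) ∨
      ∃ j < n, x = bitPal j ∧ parity (bitPal j) = parity (bitPal n) := by
  have hlt : x.length < (bitPal n).length := by simpa using hx.length_le
  rcases le_or_gt bitCode.marker.length x.length with hlen | hlen
  · obtain ⟨V, hV, hVpal, rfl⟩ := bitCode.exists_eq_code_of_palindrome_prefix
      ((List.prefix_append _ _).trans hx) hpal hlen
    obtain ⟨j, -, rfl⟩ := exists_eq_triPal_of_palindrome_prefix hV hVpal
    have hj : j < n := length_bitPal_strictMono.lt_iff_lt.1 hlt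
    have hnext := (bitPal_append_parity_prefix j).trans (bitPal_prefix_bitPal hj)
    have heq := (List.prefix_of_prefix_length_le hnext hx (by simp [bitPal])).eq_of_length
      (by simp [bitPal])
    exact Or.inr ⟨j, hj, rfl, by simpa [bitPal] using heq⟩
  · have hmarker : x ++ [parity (bitPal n)] <+: List.replicate 3 true :=
      List.prefix_of_prefix_length_le hx (List.prefix_append _ _) (by
        rw [List.length_append]
        exact hlen)
    have hmem : parity (bitPal n) ∈ x ++ [parity (bitPal n)] := by simp
    exact Or.inl ⟨Nat.le_of_lt_succ hlen, List.eq_of_mem_replicate (hmarker.subset hmem)⟩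

/-- The binary word with first letter `a` whose consecutive differences modulo 2 are the letters
of `l`. -/
def integral (a : Bool) (l : List Bool) : List Bool := l.scanl xor a

lemma length_integral (a : Bool) (l : List Bool) : (integral a l).length = l.length + 1 :=
  List.length_scanl

lemma integral_cons (a b : Bool) (l : List Bool) :
    integral a (b :: l) = a :: integral (xor a b) l :=
  List.scanl_cons

lemma integral_append_singleton (a b : Bool) (l : List Bool) :
    integral a (l ++ [b]) = integral a l ++ [xor (xor a (parity l)) b] := by
  induction l generalizing a with
  | nil => simp [integral, parity]
  | cons c l ih =>
    rw [List.cons_append, integral_cons, integral_cons, ih, List.cons_append, parity_cons,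
      Bool.xor_assoc a c]

lemma reverse_integral (a : Bool) (l : List Bool) :
    (integral a l).reverse = integral (xor a (parity l)) l.reverse := by
  induction l generalizing a with
  | nil => simp [integral, parity]
  | cons c l ih =>
    rw [integral_cons, List.reverse_cons, List.reverse_cons, integral_append_singleton, ih,
      parity_reverse, parity_cons]
    cases a <;> cases c <;> cases parity l <;> rfl

lemma map_not_integral (a : Bool) (l : List Bool) :
    (integral a l).map Bool.not = integral (!a) l := by
  induction l generalizing a with
  | nil => rfl
  | cons c l ih => rw [integral_cons, integral_cons, List.map_cons, ih, Bool.not_xor]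

lemma integral_prefix_integral_iff {a b : Bool} {l m : List Bool} :
    integral a l <+: integral b m ↔ a = b ∧ l <+: m := by
  induction l generalizing a b m with
  | nil => cases m <;> simp [integral]
  | cons c l ih =>
    cases m with
    | nil =>
      refine ⟨fun h ↦ ?_, fun h ↦ by simp at h⟩
      simpa [length_integral] using h.length_le
    | cons e m =>
      rw [integral_cons, integral_cons, List.cons_prefix_cons, List.cons_prefix_cons, ih,
        and_congr_right_iff]
      rintro rfl
      rw [Bool.xor_right_inj]

lemma integral_inj {a b : Bool} {l m : List Bool} :
    integral a l = integral b m ↔ a = b ∧ l = m := by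
  refine ⟨fun h ↦ ?_, fun ⟨ha, hl⟩ ↦ by rw [ha, hl]⟩
  have hlen := congrArg List.length h
  rw [length_integral, length_integral, Nat.add_right_cancel_iff] at hlen
  exact (integral_prefix_integral_iff.1 (h ▸ List.prefix_rfl)).imp_right (·.eq_of_length hlen)

lemma exists_eq_integral {v : List Bool} (hv : v ≠ []) : ∃ a l, v = integral a l := by
  obtain ⟨a, v, rfl⟩ := List.exists_cons_of_ne_nil hv
  refine ⟨a, ?_⟩
  induction v generalizing a with
  | nil => exact ⟨[], rfl⟩
  | cons b v ih =>
    obtain ⟨l, hl⟩ := ih b (by simp)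
    exact ⟨xor a b :: l, by rw [integral_cons, hl, ← Bool.xor_assoc, Bool.xor_self, Bool.false_xor]⟩

lemma infix_of_integral_infix {a b : Bool} {l m : List Bool}
    (h : integral a l <:+: integral b m) : l <:+: m := by
  induction m generalizing b with
  | nil =>
    have := h.length_le
    rw [length_integral, length_integral, List.length_nil, Nat.add_le_add_iff_right, Nat.le_zero,
      List.length_eq_zero_iff] at this
    rw [this]
  | cons e m ih =>
    rw [integral_cons, List.infix_cons_iff, ← integral_cons] at h
    rcases h with h | h
    · exact (integral_prefix_integral_iff.1 h).2.isInfix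
    · exact (ih h).trans (List.suffix_cons _ _).isInfix

lemma exists_integral_infix {l m : List Bool} (h : l <:+: m) (b : Bool) :
    ∃ a, integral a l <:+: integral b m := by
  induction m generalizing b with
  | nil => exact ⟨b, by rw [List.infix_nil.1 h]⟩
  | cons e m ih =>
    rcases List.infix_cons_iff.1 h with h | h
    · exact ⟨b, (integral_prefix_integral_iff.2 ⟨rfl, h⟩).isInfix⟩
    · obtain ⟨a, ha⟩ := ih h (xor b e)
      rw [integral_cons]
      exact ⟨a, ha.trans (List.suffix_cons b _).isInfix⟩

lemma isPal_integral (a : Bool) (l : List Bool) :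
    IsPal (integral a l) ↔ l.reverse = l ∧ parity l = false := by
  rw [IsPal, reverse_integral, integral_inj, and_comm]
  cases a <;> simp

lemma isEPal_integral (a : Bool) (l : List Bool) :
    IsEPal (integral a l) ↔ l.reverse = l ∧ parity l = true := by
  rw [IsEPal, Ebar, map_not_integral, reverse_integral, integral_inj, and_comm]
  cases a <;> simp

lemma exists_eq_integral_of_prefix {a : Bool} {p v : List Bool} (h : integral a p <+: v) :
    ∃ l, v = integral a l ∧ p <+: l := by
  have hv : v ≠ [] := by
    rintro rfl
    simpa [length_integral] using h.length_le
  obtain ⟨b, l, rfl⟩ := exists_eq_integral hv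
  obtain ⟨rfl, hl⟩ := integral_prefix_integral_iff.1 h
  exact ⟨l, rfl, hl⟩

lemma reverse_prefix_of_palindrome_append {α : Type*} {p t : List α} (h : (p ++ t).reverse = p ++ t)
    (hlen : t.length ≤ p.length) : t.reverse <+: p := by
  rw [List.reverse_append] at h
  exact List.prefix_of_prefix_length_le ⟨_, h⟩ (List.prefix_append _ _) (by simpa using hlen)

lemma exists_eq_cons_of_palindrome_append {α : Type*} {p s : List α}
    (h : (p ++ s).reverse = p ++ s) (hlen : s.length = p.length + 1) : ∃ x, s = x :: p.reverse := by
  obtain ⟨x, s, rfl⟩ := List.exists_cons_of_length_eq_add_one hlen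
  rw [List.length_cons, Nat.add_right_cancel_iff] at hlen
  rw [List.append_cons] at h
  have hs := reverse_prefix_of_palindrome_append h (by simp [hlen])
  have hp := List.prefix_of_prefix_length_le hs (List.prefix_append p [x]) (by simp [hlen])
  exact ⟨x, by rw [← hp.eq_of_length (by simp [hlen]), List.reverse_reverse]⟩

lemma palindrome_eq_of_prefix {p l q : List Bool} (hl : l.reverse = l) (hq : q.reverse = q)
    (hpl : p <+: l) (hpq : p <+: q) (hlen : l.length = q.length)
    (hle : q.length ≤ 2 * p.length + 1) (hparity : parity l = parity q) : l = q := by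
  obtain ⟨s, rfl⟩ := hpl
  obtain ⟨t, rfl⟩ := hpq
  simp only [List.length_append, Nat.add_left_cancel_iff] at hlen hle
  rw [parity_append, parity_append, Bool.xor_right_inj] at hparity
  congr 1
  rcases le_or_gt t.length p.length with ht | ht
  · have hs' := reverse_prefix_of_palindrome_append hl (hlen ▸ ht)
    have ht' := reverse_prefix_of_palindrome_append hq ht
    have hst := List.prefix_of_prefix_length_le hs' ht' (by simp [hlen])
    exact List.reverse_inj.1 (hst.eq_of_length (by simp [hlen]))
  · obtain ⟨x, rfl⟩ := exists_eq_cons_of_palindrome_append hl (by omega)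
    obtain ⟨y, rfl⟩ := exists_eq_cons_of_palindrome_append hq (by omega)
    rw [parity_cons, parity_cons, Bool.xor_left_inj] at hparity
    rw [hparity]

lemma palindrome_split {l p : List Bool} (hl : l.reverse = l) (hp : p <+: l)
    (hlen : l.length ≤ 2 * p.length) :
    ∃ s y, p = s ++ y ∧ y.reverse = y ∧ parity y = parity l ∧
      l.length + y.length = 2 * p.length := by
  obtain ⟨t, rfl⟩ := hp
  rw [List.length_append] at hlen
  obtain ⟨y, rfl⟩ := reverse_prefix_of_palindrome_append hl (by omega)
  refine ⟨t.reverse, y, rfl, by simpa using hl, ?_, ?_⟩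
  · rw [parity_append, parity_append, parity_reverse, Bool.xor_right_comm, Bool.xor_self,
      Bool.false_xor]
  · simp only [List.length_append, List.length_reverse]
    omega

/-- `q` is a shortest palindrome of parity `e` having `p` as a prefix. Through `integral`, parity
`false` corresponds to palindromes and parity `true` to `E`-palindromes. -/
structure IsParityClosure (e : Bool) (p q : List Bool) : Prop where
  reverse_eq : q.reverse = q
  parity_eq : parity q = e
  prefix_closure : p <+: q
  length_le {l : List Bool} : l.reverse = l → parity l = e → p <+: l → q.length ≤ l.length

namespace IsParityClosure

variable {e : Bool} {p q : List Bool}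

lemma length_le_two_mul (h : IsParityClosure e p q) : q.length ≤ 2 * p.length + 1 := by
  have hle := h.length_le (l := p ++ e :: p.reverse) (by simp) (by
    rw [parity_append, parity_cons, parity_reverse, Bool.xor_left_comm, Bool.xor_self,
      Bool.xor_false]) (List.prefix_append _ _)
  rw [List.length_append, List.length_cons, List.length_reverse] at hle
  omega

lemma eq_integral_of_shortest (h : IsParityClosure e p q) {Q : Word → Prop} {a : Bool}
    (hQ : ∀ l, Q (integral a l) ↔ l.reverse = l ∧ parity l = e) {v : Word}
    (hv : integral a p <+: v ∧ Q v)
    (hmin : ∀ v', integral a p <+: v' ∧ Q v' → v.length ≤ v'.length) : v = integral a q := by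
  obtain ⟨hpv, hQv⟩ := hv
  obtain ⟨l, rfl, hpl⟩ := exists_eq_integral_of_prefix hpv
  obtain ⟨hl, hle⟩ := (hQ l).1 hQv
  have hlq := hmin (integral a q) ⟨integral_prefix_integral_iff.2 ⟨rfl, h.prefix_closure⟩,
    (hQ q).2 ⟨h.reverse_eq, h.parity_eq⟩⟩
  rw [length_integral, length_integral, Nat.add_le_add_iff_right] at hlq
  rw [palindrome_eq_of_prefix hl h.reverse_eq hpl h.prefix_closure
    (hlq.antisymm (h.length_le hl hle hpl)) h.length_le_two_mul (hle.trans h.parity_eq.symm)]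

lemma epalCl_integral (h : IsParityClosure true p q) (a : Bool) :
    epalCl (integral a p) = integral a q :=
  have hspec := (exists_minLength (epal_ext (integral a p))).choose_spec
  h.eq_integral_of_shortest (isEPal_integral a) hspec.1 hspec.2

lemma palCl_integral (h : IsParityClosure false p q) (a : Bool) :
    palCl (integral a p) = integral a q :=
  have hspec := (exists_minLength (pal_ext (integral a p))).choose_spec
  h.eq_integral_of_shortest (isPal_integral a) hspec.1 hspec.2

lemma wp_succ {n : ℕ} (hn : wp n = integral true p)
    (h : IsParityClosure (decide ((n + 1) % 4 = 1 ∨ (n + 1) % 4 = 2)) (p ++ [parity p]) q) :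
    wp (n + 1) = integral true q := by
  have happend : wp n ++ [true] = integral true (p ++ [parity p]) := by
    rw [hn, integral_append_singleton, Bool.xor_assoc, Bool.xor_self, Bool.xor_false]
  rw [wp, happend]
  split_ifs with hmod
  · rw [decide_eq_true hmod] at h
    exact h.epalCl_integral true
  · rw [decide_eq_false hmod] at h
    exact h.palCl_integral true

end IsParityClosure

lemma wp_one : wp 1 = integral true [true] := by
  rw [wp, if_pos (Or.inl rfl)]
  refine IsParityClosure.epalCl_integral (p := []) ⟨rfl, rfl, List.nil_prefix, ?_⟩ true
  rintro (_ | ⟨a, l⟩) - hparity -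
  · cases hparity
  · exact Nat.succ_le_succ l.length.zero_le

lemma wp_two : wp 2 = integral true (bitPal 0) := by
  refine IsParityClosure.wp_succ wp_one ⟨rfl, rfl, ⟨[true], rfl⟩, ?_⟩
  rintro _ - hparity ⟨_ | ⟨a, s⟩, rfl⟩
  · cases hparity
  · exact Nat.le_add_left 3 s.length

-- `l` is covered by its prefix `u ++ [c]` and its suffix `c :: u`; the word `y` is their overlap.
lemma palindrome_overlap {u l : List Bool} {c : Bool} (hu : u.reverse = u) (hl : l.reverse = l)
    (hul : u ++ [c] <+: l) (hlen : l.length ≤ 2 * u.length + 2) :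
    ∃ y, parity y = parity l ∧ l.length + y.length = 2 * u.length + 2 ∧
      (y <+: [c] ∨ ∃ x, y = c :: (x ++ [c]) ∧ x.reverse = x ∧ x ++ [c] <+: u) := by
  obtain ⟨s, y, hsy, hy, hparity, hylen⟩ := palindrome_split hl hul
    (by rw [List.length_append, List.length_singleton]; omega)
  refine ⟨y, hparity, by simpa [mul_add] using hylen, ?_⟩
  rcases List.eq_nil_or_concat y with rfl | ⟨y, b, rfl⟩
  · exact Or.inl List.nil_prefix
  rw [List.concat_eq_append, ← List.append_assoc] at hsy
  obtain ⟨rfl, hcb⟩ := List.append_inj' hsy rfl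
  obtain rfl : c = b := List.singleton_inj.1 hcb
  rw [List.concat_eq_append] at hy ⊢
  rcases y with _ | ⟨b, x⟩
  · exact Or.inl List.prefix_rfl
  · rw [List.reverse_append, List.reverse_singleton, List.reverse_cons, List.singleton_append,
      List.cons_append, List.cons.injEq] at hy
    obtain ⟨rfl, hx⟩ := hy
    have hx : x.reverse = x := (List.append_inj' hx rfl).1
    refine Or.inr ⟨x, rfl, hx, ?_⟩
    rw [← hu, List.reverse_append, List.reverse_cons, hx]
    exact List.prefix_append _ _

lemma exists_overlap_bitPal {n : ℕ} {l : List Bool} (hl : l.reverse = l)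
    (hnl : bitPal n ++ [parity (bitPal n)] <+: l) (hlen : l.length ≤ 2 * (bitPal n).length + 2) :
    ∃ y, parity y = parity l ∧ l.length + y.length = 2 * (bitPal n).length + 2 ∧
      (y <+: [parity (bitPal n)] ∨ (y.length ≤ 4 ∧ parity (bitPal n) = true) ∨
        ∃ j < n, y.length = (bitPal j).length + 2 ∧ parity (bitPal j) = parity (bitPal n) ∧
          parity y = parity (bitPal n)) := by
  obtain ⟨y, hparity, hylen, hy | ⟨x, rfl, hx, hxd⟩⟩ :=
    palindrome_overlap (reverse_bitPal n) hl hnl hlen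
  · exact ⟨y, hparity, hylen, Or.inl hy⟩
  refine ⟨_, hparity, hylen, Or.inr ?_⟩
  rcases palindrome_prefix_cases hx hxd with ⟨hxlen, hd⟩ | ⟨j, hj, rfl, hd⟩
  · exact Or.inl ⟨by simpa [Nat.lt_succ_iff] using hxlen, hd⟩
  · refine Or.inr ⟨j, hj, by simp, hd, ?_⟩
    rw [parity_cons, parity_append, hd]
    cases parity (bitPal n) <;> rfl

lemma length_ret_centre (k : ℕ) :
    (bitCode.ret (centre k)).length = if Even k then 1 else 6 := by
  by_cases hk : Even k <;> simp [centre, hk, bitCode]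

lemma length_bitPal_succ_le_of_even {k : ℕ} {l : List Bool} (hl : l.reverse = l)
    (hparity : parity l = parity (bitPal (2 * k + 1)))
    (hkl : bitPal (2 * k) ++ [parity (bitPal (2 * k))] <+: l) :
    (bitPal (2 * k + 1)).length ≤ l.length := by
  have hd := length_bitPal_two_mul_add_one k
  rw [length_ret_centre] at hd
  rcases le_or_gt l.length (2 * (bitPal (2 * k)).length + 2) with hlen | hlen
  · obtain ⟨y, hy, hylen, hcases⟩ := exists_overlap_bitPal hl hkl hlen
    have hodd : parity (bitPal (2 * k + 1)) = !decide (Even k) := by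
      rw [parity_bitPal, ← decide_not]
      exact decide_eq_decide.2 (by rw [Nat.even_iff]; omega)
    rw [hparity, hodd] at hy
    rw [parity_bitPal_even] at hcases
    by_cases hk : Even k
    · have hy4 : y.length ≤ 4 := by
        rcases hcases with hprefix | ⟨hy4, -⟩ | ⟨-, -, -, -, hy'⟩
        · exact hprefix.length_le.trans (by simp)
        · exact hy4
        · simp [hk, hy'] at hy
      rw [if_pos hk] at hd
      omega
    · have hprefix : ∀ y ∈ [false].inits, parity y = false := by decide
      rcases hcases with hy' | ⟨-, hk'⟩ | ⟨-, -, -, -, hy'⟩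
      · rw [decide_eq_false hk] at hy hy'
        simp [hprefix y ((List.mem_inits _ _).2 hy')] at hy
      · exact absurd (of_decide_eq_true hk') hk
      · simp [hk, hy'] at hy
  · split_ifs at hd <;> omega

lemma length_bitPal_succ_le_of_odd {k : ℕ} {l : List Bool} (hl : l.reverse = l)
    (hkl : bitPal (2 * k + 1) ++ [parity (bitPal (2 * k + 1))] <+: l) :
    (bitPal (2 * k + 2)).length ≤ l.length := by
  have hd : (bitPal (2 * k + 2)).length ≤ 2 * (bitPal (2 * k + 1)).length + 1 := by
    rcases k with _ | k
    · decide
    · exact Nat.le_succ_of_le (le_of_add_le_left (length_bitPal_add_four k).le)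
  rcases le_or_gt l.length (2 * (bitPal (2 * k + 1)).length + 2) with hlen | hlen
  · obtain ⟨y, -, hylen, hcases⟩ := exists_overlap_bitPal hl hkl hlen
    rcases k with _ | k
    · have hd₁ : (bitPal (2 * 0 + 1)).length = 4 := by decide
      have hd₂ : (bitPal (2 * 0 + 2)).length = 9 := by decide
      rcases hcases with hprefix | ⟨-, hfalse⟩ | ⟨j, hj, -, hfalse, -⟩
      · have hy : y.length ≤ 1 := hprefix.length_le
        omega
      · exact absurd hfalse (by decide)
      · obtain rfl : j = 0 := by omega
        exact absurd hfalse (by decide)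
    · have hsum : (bitPal (2 * (k + 1) + 2)).length + (bitPal (2 * k)).length
        = 2 * (bitPal (2 * (k + 1) + 1)).length := length_bitPal_add_four k
      suffices hy : y.length ≤ (bitPal (2 * k)).length + 2 by omega
      have hpos : 3 ≤ (bitPal (2 * k)).length :=
        (bitPal_prefix_bitPal (Nat.zero_le (2 * k))).length_le
      rcases hcases with hprefix | ⟨hy, -⟩ | ⟨j, hj, hy, hparity, -⟩
      · have hy : y.length ≤ 1 := hprefix.length_le
        omega
      · omega
      · rw [parity_bitPal, parity_bitPal, decide_eq_decide] at hparity
        have hle : j ≤ 2 * k := by omega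
        exact hy.trans_le (Nat.add_le_add_right (bitPal_prefix_bitPal hle).length_le 2)
  · omega

lemma isParityClosure_bitPal (n : ℕ) :
    IsParityClosure (parity (bitPal (n + 1))) (bitPal n ++ [parity (bitPal n)])
      (bitPal (n + 1)) := by
  refine ⟨reverse_bitPal _, rfl, bitPal_append_parity_prefix n, fun {l} hl hparity hnl ↦ ?_⟩
  obtain ⟨k, rfl | rfl⟩ := n.even_or_odd'
  · exact length_bitPal_succ_le_of_even hl hparity hnl
  · exact length_bitPal_succ_le_of_odd hl hnl

lemma wp_add_two : ∀ n, wp (n + 2) = integral true (bitPal n)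
  | 0 => wp_two
  | n + 1 => by
    have hmod : parity (bitPal (n + 1)) = decide ((n + 3) % 4 = 1 ∨ (n + 3) % 4 = 2) := by
      rw [parity_bitPal]
      exact decide_eq_decide.2 (by omega)
    exact IsParityClosure.wp_succ (wp_add_two n) (hmod ▸ isParityClosure_bitPal n)

lemma append_true_prefix_wp_succ (n : ℕ) : wp n ++ [true] <+: wp (n + 1) := by
  rw [wp]
  split_ifs
  · exact (exists_minLength (epal_ext _)).choose_spec.1.1
  · exact (exists_minLength (pal_ext _)).choose_spec.1.1

lemma wp_prefix_wp {m n : ℕ} (h : m ≤ n) : wp m <+: wp n := by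
  induction h with
  | refl => exact List.prefix_rfl
  | step _ ih => exact ih.trans ((List.prefix_append _ _).trans (append_true_prefix_wp_succ _))

lemma isEPal_wp {n : ℕ} (h : (n + 1) % 4 = 1 ∨ (n + 1) % 4 = 2) : IsEPal (wp (n + 1)) := by
  rw [wp, if_pos h]
  exact (exists_minLength (epal_ext _)).choose_spec.1.2

lemma isPal_wp {n : ℕ} (h : ¬((n + 1) % 4 = 1 ∨ (n + 1) % 4 = 2)) : IsPal (wp (n + 1)) := by
  rw [wp, if_neg h]
  exact (exists_minLength (pal_ext _)).choose_spec.1.2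

lemma FactorUp.map_not {v : Word} (h : FactorUp v) : FactorUp (v.map Bool.not) := by
  obtain ⟨n, hn⟩ := h
  have hE : Ebar v <:+: wp (4 * n + 1 + 1) := by
    rw [← isEPal_wp (n := 4 * n + 1) (by omega)]
    have hle : n ≤ 4 * n + 1 + 1 := by omega
    exact List.reverse_infix.2 ((hn.trans (wp_prefix_wp hle).isInfix).map _)
  refine ⟨4 * n + 1 + 1 + 1, ?_⟩
  rw [← isPal_wp (n := 4 * n + 1 + 1) (by omega), ← List.reverse_reverse (v.map Bool.not)]
  exact List.reverse_infix.2 (hE.trans (wp_prefix_wp (Nat.le_succ _)).isInfix)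

lemma factorUp_integral_iff {a : Bool} {l : List Bool} :
    FactorUp (integral a l) ↔ BitFactor l := by
  constructor
  · rintro ⟨n, hn⟩
    refine ⟨n, infix_of_integral_infix (a := a) (b := true) ?_⟩
    rw [← wp_add_two]
    exact hn.trans (wp_prefix_wp (Nat.le_add_right n 2)).isInfix
  · rintro ⟨n, hn⟩
    obtain ⟨b, hb⟩ := exists_integral_infix hn true
    rw [← wp_add_two] at hb
    rcases Bool.eq_or_eq_not a b with rfl | rfl
    · exact ⟨_, hb⟩
    · rw [← map_not_integral]
      exact FactorUp.map_not ⟨_, hb⟩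

lemma Cp_succ (n : ℕ) : Cp (n + 1) = 2 * complexity BitFactor n := by
  have himage : {v | FactorUp v ∧ v.length = n + 1} = (fun x : Bool × List Bool ↦
      integral x.1 x.2) '' (Set.univ ×ˢ {l | BitFactor l ∧ l.length = n}) := by
    ext v
    constructor
    · rintro ⟨hv, hlen⟩
      obtain ⟨a, l, rfl⟩ := exists_eq_integral (List.ne_nil_of_length_eq_add_one hlen)
      rw [length_integral, Nat.add_right_cancel_iff] at hlen
      exact ⟨(a, l), ⟨trivial, factorUp_integral_iff.1 hv, hlen⟩, rfl⟩
    · rintro ⟨⟨a, l⟩, ⟨-, hl, hlen⟩, rfl⟩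
      exact ⟨factorUp_integral_iff.2 hl, by rw [length_integral, hlen]⟩
  have hinj : Function.Injective fun x : Bool × List Bool ↦ integral x.1 x.2 :=
    fun x y h ↦ Prod.ext_iff.2 (integral_inj.1 h)
  rw [Cp, himage, Set.ncard_image_of_injective _ hinj, Set.ncard_prod, Set.ncard_univ,
    Nat.card_eq_fintype_card, Fintype.card_bool, complexity]

lemma secondDiff_Cp_succ (n : ℕ) :
    secondDiff Cp (n + 1) = 2 * secondDiff (complexity BitFactor) n := by
  rw [secondDiff, secondDiff, Cp_succ, Cp_succ, Cp_succ]
  push_cast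
  ring

lemma secondDiff_Cp_zero : secondDiff Cp 0 = 1 := by
  have hnil : BitFactor [] := ⟨0, List.nil_infix⟩
  have htrue : BitFactor [true] := ⟨0, [], [true, true], rfl⟩
  have hfalse : BitFactor [false] := ⟨2, by decide⟩
  have hone : (complexity BitFactor 1 : ℤ) = 2 := by
    rw [complexity_eq_sum, sum_wordsOfLength_succ, wordsOfLength_zero, Finset.sum_singleton,
      Fintype.sum_bool, indicator, indicator, if_pos htrue, if_pos hfalse, one_add_one_eq_two]
  have hzero : Cp 0 = 1 := complexity_zero (P := FactorUp) ⟨0, List.nil_infix⟩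
  rw [secondDiff, Cp_succ, Cp_succ, complexity_zero hnil, hzero]
  push_cast
  rw [hone]
  norm_num

lemma length_wp_add_two (n : ℕ) : (wp (n + 2)).length = (bitPal n).length + 1 := by
  rw [wp_add_two, length_integral]

lemma length_sOdd (k : ℕ) : (sOdd (k + 2)).length + 2 * (wp (2 * k)).length
    = 2 * (wp (2 * k + 1)).length + (wp (2 * k + 3)).length := by
  have h₁ : (wp (2 * k)).length ≤ (wp (2 * k + 1)).length := (wp_prefix_wp (by omega)).length_le
  have h₃ : (wp (2 * k)).length ≤ (wp (2 * k + 3)).length := (wp_prefix_wp (by omega)).length_le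
  obtain ⟨m, rfl | rfl⟩ := k.even_or_odd'
  · rw [sOdd, if_pos (by omega), s1, show 4 * ((2 * m + 2) / 2) - 3 = 2 * (2 * m) + 1 by omega,
      show 4 * ((2 * m + 2) / 2) - 1 = 2 * (2 * m) + 3 by omega,
      show 4 * ((2 * m + 2) / 2) - 4 = 2 * (2 * m) by omega]
    simp only [List.length_append, List.length_reverse, List.length_drop]
    omega
  · rw [sOdd, if_neg (by omega), s3,
      show 4 * ((2 * m + 1 + 2) / 2) - 1 = 2 * (2 * m + 1) + 1 by omega,
      show 4 * ((2 * m + 1 + 2) / 2) + 1 = 2 * (2 * m + 1) + 3 by omega,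
      show 4 * ((2 * m + 1 + 2) / 2) - 2 = 2 * (2 * m + 1) by omega]
    simp only [Ebar, List.length_append, List.length_reverse, List.length_map, List.length_drop]
    omega

/-- The weak bispecial words of `BitFactor`, by increasing length; `bitWeak k` is the difference
word of `sOdd (k + 2)`, that is, of `s_{2k+5}`. -/
def bitWeak : ℕ → List Bool
  | 0 => [true, false, true, true, true, true, false, true]
  | k + 1 => bitCode.code (triWeak k)

lemma exists_eq_bitWeak_of_isWeak {v : List Bool} (hv : IsWeak BitFactor id v) :
    ∃ k, v = bitWeak k := by
  rcases eq_of_isWeak_bitFactor hv with hv | ⟨k, hv⟩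
  · exact ⟨0, hv⟩
  · exact ⟨k + 1, hv⟩

lemma length_bitWeak_add_one (k : ℕ) : (bitWeak k).length + 1 = (sOdd (k + 2)).length := by
  have hs := length_sOdd k
  rcases k with _ | k
  · have h₀ : (wp (2 * 0)).length = 0 := by simp [wp]
    have h₁ : (wp (2 * 0 + 1)).length = 2 := congrArg List.length wp_one
    have h₃ : (wp (2 * 0 + 3)).length = 5 := length_wp_add_two 1
    have h₈ : (bitWeak 0).length = 8 := rfl
    omega
  · have hz : (bitWeak (k + 1)).length + _ = _ := length_code_triWeak k
    have h₀ : (wp (2 * (k + 1))).length = _ := length_wp_add_two (2 * k)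
    have h₁ : (wp (2 * (k + 1) + 1)).length = _ := length_wp_add_two (2 * k + 1)
    have h₃ : (wp (2 * (k + 1) + 3)).length = _ := length_wp_add_two (2 * k + 3)
    omega

lemma length_bitPal_lt_length_bitWeak (k : ℕ) :
    (bitPal (2 * k + 1)).length < (bitWeak k).length := by
  rcases k with _ | k
  · decide
  · have hz : (bitWeak (k + 1)).length + _ = _ := length_code_triWeak k
    have hlt : (bitPal (2 * k)).length < (bitPal (2 * k + 1)).length :=
      length_bitPal_strictMono (by omega)
    change (bitPal (2 * k + 3)).length < _
    omega

lemma length_bitWeak_lt_length_bitPal (k : ℕ) :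
    (bitWeak k).length < (bitPal (2 * k + 3)).length := by
  rcases k with _ | k
  · decide
  · have hz : (bitWeak (k + 1)).length + _ = _ := length_code_triWeak k
    have h₄ := length_bitPal_add_four k
    have hpos : 0 < (bitCode.ret (centre (k + 2))).length := by
      rw [length_ret_centre]
      split_ifs <;> decide
    have h₅ : (bitPal (2 * (k + 1) + 3)).length + 3 = 2 * (bitPal (2 * k + 4)).length + _ :=
      length_bitPal_two_mul_add_one (k + 2)
    have hlt : (bitPal (2 * k + 1)).length < (bitPal (2 * k + 3)).length :=
      length_bitPal_strictMono (by omega)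
    omega

lemma length_bitWeak_injective : Function.Injective fun k ↦ (bitWeak k).length := by
  refine (strictMono_nat_of_lt_succ fun k ↦ ?_).injective
  exact (length_bitWeak_lt_length_bitPal k).trans (length_bitPal_lt_length_bitWeak (k + 1))

lemma length_bitWeak_ne (k i : ℕ) : (bitWeak k).length ≠ (bitPal (2 * i + 1)).length := by
  intro h
  have hki := h ▸ length_bitPal_lt_length_bitWeak k
  have hik := h ▸ length_bitWeak_lt_length_bitPal k
  have := length_bitPal_strictMono.lt_iff_lt.1 hki
  have := length_bitPal_strictMono.lt_iff_lt.1 hik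
  omega

lemma secondDiff_bitFactor_nonneg {n : ℕ} (h : ∀ k, n ≠ (bitWeak k).length) :
    0 ≤ secondDiff (complexity BitFactor) n := by
  have hweak (v : List Bool) (hv : v.length = n) : ¬IsWeak BitFactor id v := by
    intro hw
    obtain ⟨k, rfl⟩ := exists_eq_bitWeak_of_isWeak hw
    exact h k hv.symm
  have hlen : (List.replicate n true).length = n := List.length_replicate
  exact ((bilateral_bounds bitFactor_factorClosed bitFactor_biextendable _).2.1
    (hweak _ hlen)).trans (bilateral_le_secondDiff bitFactor_factorClosed bitFactor_biextendable _
      hlen fun v hv hw ↦ absurd hw (hweak v hv))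

lemma neg_one_le_secondDiff_bitFactor (n : ℕ) : -1 ≤ secondDiff (complexity BitFactor) n := by
  by_cases h : ∃ k, n = (bitWeak k).length
  · obtain ⟨k, rfl⟩ := h
    refine (bilateral_bounds bitFactor_factorClosed bitFactor_biextendable (bitWeak k)).1.trans
      (bilateral_le_secondDiff bitFactor_factorClosed bitFactor_biextendable _ rfl fun v hv hw ↦ ?_)
    obtain ⟨j, rfl⟩ := exists_eq_bitWeak_of_isWeak hw
    rw [length_bitWeak_injective hv]
  · exact neg_one_lt_zero.le.trans (secondDiff_bitFactor_nonneg (not_exists.1 h))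

lemma one_le_secondDiff_bitFactor (k : ℕ) :
    1 ≤ secondDiff (complexity BitFactor) (bitPal (2 * k + 1)).length := by
  refine ((bilateral_bounds bitFactor_factorClosed bitFactor_biextendable _).2.2
    (isStrong_bitPal_odd k)).trans (bilateral_le_secondDiff bitFactor_factorClosed
      bitFactor_biextendable _ rfl fun v hv hw ↦ ?_)
  obtain ⟨j, rfl⟩ := exists_eq_bitWeak_of_isWeak hw
  exact absurd hv (length_bitWeak_ne j k)

/-- bounds on the second difference of the factor complexity of `u_p`. -/
theorem second_difference_complexity_bounds (n : ℕ) :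
    ((∃ k : ℕ, 1 ≤ k ∧ n = (wp (2*k+1)).length) →
      (Cp (n+2) : ℤ) - 2 * Cp (n+1) + Cp n ≥ 2) ∧
    ((∃ k : ℕ, 2 ≤ k ∧ n = (sOdd k).length) →
      (Cp (n+2) : ℤ) - 2 * Cp (n+1) + Cp n ≥ -2) ∧
    ((¬ ∃ k : ℕ, 1 ≤ k ∧ n = (wp (2*k+1)).length) →
      (¬ ∃ k : ℕ, 2 ≤ k ∧ n = (sOdd k).length) →
      (Cp (n+2) : ℤ) - 2 * Cp (n+1) + Cp n ≥ 0) := by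
  change (_ → secondDiff Cp n ≥ 2) ∧ (_ → secondDiff Cp n ≥ -2) ∧ (_ → _ → secondDiff Cp n ≥ 0)
  have hw (k : ℕ) (hk : 1 ≤ k) :
      (wp (2 * k + 1)).length = (bitPal (2 * (k - 1) + 1)).length + 1 := by
    rw [← length_wp_add_two, show 2 * (k - 1) + 1 + 2 = 2 * k + 1 by omega]
  rcases n with _ | n
  · rw [secondDiff_Cp_zero]
    refine ⟨fun ⟨k, hk, hn⟩ ↦ ?_, by norm_num, by norm_num⟩
    exact absurd (hn.trans (hw k hk)) (Nat.succ_ne_zero _).symm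
  · rw [secondDiff_Cp_succ]
    refine ⟨?_, fun _ ↦ ?_, fun _ hs ↦ ?_⟩
    · rintro ⟨k, hk, hn⟩
      obtain rfl := Nat.succ.inj (hn.trans (hw k hk))
      linarith [one_le_secondDiff_bitFactor (k - 1)]
    · linarith [neg_one_le_secondDiff_bitFactor n]
    · have hweak (k : ℕ) : n ≠ (bitWeak k).length := by
        rintro rfl
        exact hs ⟨k + 2, Nat.le_add_left 2 k, length_bitWeak_add_one k⟩
      linarith [secondDiff_bitFactor_nonneg hweak]
end
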